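/- arXiv:1406.3464 — 2 statements merged into one kernel-verified Lean document; each statement's English description precedes it below -/
import Mathlib

section
/- Let G be a finite group. Every 2-maximal subgroup of G is 𝔘-subnormal in G if and only if G is either supersoluble or an SDH-group. -/
open Subgroup

/-- A finite group is supersoluble if it has a normal series, all of whose terms are
normal in the whole group, with cyclic factors. -/
def IsSupersoluble (G : Type*) [Group G] : Prop :=
  ∃ (n : ℕ) (c : Fin (n + 1) → Subgroup G) (hc : ∀ i, (c i).Normal),
    c 0 = ⊥ ∧ c (Fin.last n) = ⊤ ∧
    ∀ i : Fin n, c i.castSucc ≤ c i.succ ∧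
      haveI := (hc i.castSucc).subgroupOf (c i.succ)
      IsCyclic (↥(c i.succ) ⧸ ((c i.castSucc).subgroupOf (c i.succ)))

/-- `H` is a maximal subgroup of `K`, where `H ≤ K` are subgroups of a common group. -/
def IsMaximalIn {G : Type*} [Group G] (H K : Subgroup G) : Prop :=
  H ≤ K ∧ IsCoatom (H.subgroupOf K)

/-- The `n`-maximal subgroups of `G`: `0`-maximal is `G` itself, and an `(n+1)`-maximal
subgroup is a maximal subgroup of some `n`-maximal subgroup. -/
def IsNMaximal {G : Type*} [Group G] : ℕ → Subgroup G → Prop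
  | 0, H => H = ⊤
  | n + 1, H => ∃ K : Subgroup G, IsNMaximal n K ∧ IsMaximalIn H K

/-- `H` is `K`-`𝔘`-subnormal in `K`: there is a chain of subgroups
`H = H₀ ≤ H₁ ≤ ⋯ ≤ Hₜ = K` such that at each step either `H_{i-1}` is normal in `H_i`
or `H_i` modulo the core of `H_{i-1}` in `H_i` is supersoluble. -/
def IsKUSubnormalIn {G : Type*} [Group G] (H K : Subgroup G) : Prop :=
  ∃ (n : ℕ) (c : Fin (n + 1) → Subgroup G),
    c 0 = H ∧ c (Fin.last n) = K ∧
    ∀ i : Fin n, c i.castSucc ≤ c i.succ ∧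
      (((c i.castSucc).subgroupOf (c i.succ)).Normal ∨
        IsSupersoluble (↥(c i.succ) ⧸ ((c i.castSucc).subgroupOf (c i.succ)).normalCore))

/-- `H` is `K`-`𝔘`-subnormal in `G`. -/
def IsKUSubnormal {G : Type*} [Group G] (H : Subgroup G) : Prop :=
  IsKUSubnormalIn H ⊤

/-- `H` is `𝔘`-subnormal in `G`: there is a chain of subgroups
`H = H₀ ≤ H₁ ≤ ⋯ ≤ Hₙ = G` with `H_i` modulo the core of `H_{i-1}` in `H_i`
supersoluble at each step. -/
def IsUSubnormal {G : Type*} [Group G] (H : Subgroup G) : Prop :=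
  ∃ (n : ℕ) (c : Fin (n + 1) → Subgroup G),
    c 0 = H ∧ c (Fin.last n) = ⊤ ∧
    ∀ i : Fin n, c i.castSucc ≤ c i.succ ∧
      IsSupersoluble (↥(c i.succ) ⧸ ((c i.castSucc).subgroupOf (c i.succ)).normalCore)

/-- The supersoluble residual `G^𝔘` of `G`: the intersection of all normal subgroups `N`
of `G` with `G/N` supersoluble. -/
def ssResidual (G : Type*) [Group G] : Subgroup G :=
  ⨅ N ∈ {N : Subgroup G | ∃ hN : N.Normal, haveI := hN; IsSupersoluble (G ⧸ N)}, N

/-- `N` is a minimal normal subgroup of `G`. -/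
def IsMinimalNormal {G : Type*} [Group G] (N : Subgroup G) : Prop :=
  N.Normal ∧ N ≠ ⊥ ∧ ∀ M : Subgroup G, M.Normal → M ≤ N → M ≠ ⊥ → M = N

/-- `G` is minimal nonsupersoluble: not supersoluble, but all proper subgroups are. -/
def IsMinimalNonsupersoluble (G : Type*) [Group G] : Prop :=
  ¬ IsSupersoluble G ∧ ∀ H : Subgroup G, H ≠ ⊤ → IsSupersoluble H

/-- `G` is an `SDH`-group: minimal nonsupersoluble with `G^𝔘` a minimal normal subgroup. -/
def IsSDH (G : Type*) [Group G] : Prop :=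
  IsMinimalNonsupersoluble G ∧ IsMinimalNormal (ssResidual G)

/-- `H` is a Sylow `p`-subgroup of its ambient (finite) group. -/
def IsSylowSubgroup {G : Type*} [Group G] (p : ℕ) (H : Subgroup G) : Prop :=
  IsPGroup p H ∧ ¬ p ∣ H.index

/-- A finite group is Ore dispersive if, enumerating the prime divisors of `|G|`
in decreasing order as `p₁ > p₂ > ⋯ > pₙ`, for every `i` it has a normal subgroup of
order `p₁^{a₁} ⋯ p_i^{a_i}`. -/
def OreDispersive (G : Type*) [Group G] : Prop :=
  ∀ p : ℕ, p.Prime → ∃ N : Subgroup G, N.Normal ∧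
    Nat.card N =
      ∏ q ∈ (Nat.card G).primeFactors.filter (fun q => p ≤ q),
        q ^ (Nat.card G).factorization q

/-- `A/B` is a chief factor of `G`. -/
def IsChiefFactor {G : Type*} [Group G] (A B : Subgroup G) : Prop :=
  A.Normal ∧ B ≤ A ∧ ∃ hB : B.Normal,
    haveI := hB
    IsMinimalNormal (A.map (QuotientGroup.mk' B))

/-- The subgroups `H` and `K` of `G` are conjugate in `G`. -/
def ConjSubgroup {G : Type*} [Group G] (H K : Subgroup G) : Prop :=
  ∃ g : G, K = H.map (MulAut.conj g).toMonoidHom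

/-- The Frattini subgroup of a subgroup `H` of `G`, as a subgroup of `G`. -/
def frattiniIn {G : Type*} [Group G] (H : Subgroup G) : Subgroup G :=
  (frattini H).map H.subtype

/-- `G = P ⋊ (Q ⋊ R)` as an internal statement about subgroups `P`, `Q`, `R` of `G`. -/
def IsInternalSemidirect3 {G : Type*} [Group G] (P Q R : Subgroup G) : Prop :=
  P.Normal ∧ P ⊓ (Q ⊔ R) = ⊥ ∧ P ⊔ Q ⊔ R = ⊤ ∧
    (Q.subgroupOf (Q ⊔ R)).Normal ∧ Q ⊓ R = ⊥

/-- `G = P ⋊ (Q ⋊ (R ⋊ T))` as an internal statement about subgroups of `G`. -/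
def IsInternalSemidirect4 {G : Type*} [Group G] (P Q R T : Subgroup G) : Prop :=
  P.Normal ∧ P ⊓ (Q ⊔ R ⊔ T) = ⊥ ∧ P ⊔ Q ⊔ R ⊔ T = ⊤ ∧
    (Q.subgroupOf (Q ⊔ R ⊔ T)).Normal ∧ Q ⊓ (R ⊔ T) = ⊥ ∧
    (R.subgroupOf (R ⊔ T)).Normal ∧ R ⊓ T = ⊥

set_option linter.style.haveILetI false
namespace SSH

/-- `B` is cyclic modulo `A`. -/
def Cyc {G : Type*} [Group G] (A B : Subgroup G) : Prop :=
  ∃ b ∈ B, ∀ x ∈ B, ∃ k : ℤ, x * (b ^ k)⁻¹ ∈ A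

/-- One step of a normal series with cyclic factors. -/
def Step {G : Type*} [Group G] (A B : Subgroup G) : Prop :=
  A.Normal ∧ B.Normal ∧ A ≤ B ∧ Cyc A B

/-- `G / N` is supersoluble. -/
def SSf {G : Type*} [Group G] (N : Subgroup G) : Prop :=
  Relation.ReflTransGen Step N ⊤

theorem cyc_iff {G : Type*} [Group G] (A B : Subgroup G) [A.Normal] :
    Cyc A B ↔ IsCyclic (B.map (QuotientGroup.mk' A)) := by
  constructor
  · rintro ⟨b, hb, h⟩
    refine ⟨⟨⟨QuotientGroup.mk' A b, mem_map_of_mem _ hb⟩, ?_⟩⟩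
    rintro ⟨_, x, hx, rfl⟩
    obtain ⟨k, hk⟩ := h x hx
    refine ⟨k, ?_⟩
    apply Subtype.ext
    have := (QuotientGroup.eq_one_iff _).2 hk
    simp only [QuotientGroup.mk_mul, QuotientGroup.mk_inv, QuotientGroup.mk_zpow,
      mul_inv_eq_one] at this
    simpa using this.symm
  · rintro ⟨⟨⟨_, b, hb, rfl⟩, h⟩⟩
    refine ⟨b, hb, fun x hx => ?_⟩
    obtain ⟨k, hk⟩ := h ⟨_, mem_map_of_mem (QuotientGroup.mk' A) hx⟩
    refine ⟨k, (QuotientGroup.eq_one_iff _).1 ?_⟩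
    have := congrArg Subtype.val hk
    simp only [QuotientGroup.mk_mul, QuotientGroup.mk_inv, QuotientGroup.mk_zpow,
      mul_inv_eq_one]
    simpa using this.symm

theorem Cyc.mono {G : Type*} [Group G] {A B B' : Subgroup G} [A.Normal]
    (h : Cyc A B) (hB : B' ≤ B) : Cyc A B' := by
  rw [cyc_iff] at *
  exact isCyclic_of_injective (Subgroup.inclusion (Subgroup.map_mono hB))
    (Subgroup.inclusion_injective _)

theorem Cyc.comap {G H : Type*} [Group G] [Group H] {A B : Subgroup G} [A.Normal]
    (h : Cyc A B) (f : H →* G) : Cyc (A.comap f) (B.comap f) := by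
  obtain ⟨_, ⟨b, hb, rfl⟩, hk⟩ := h.mono (Subgroup.map_comap_le f B)
  refine ⟨b, hb, fun x hx => ?_⟩
  obtain ⟨k, hk⟩ := hk (f x) (mem_map_of_mem f hx)
  exact ⟨k, by simpa [Subgroup.mem_comap] using hk⟩

theorem Cyc.map {G H : Type*} [Group G] [Group H] {A B : Subgroup G}
    (h : Cyc A B) (f : G →* H) : Cyc (A.map f) (B.map f) := by
  obtain ⟨b, hb, hk⟩ := h
  refine ⟨f b, mem_map_of_mem f hb, ?_⟩
  rintro _ ⟨x, hx, rfl⟩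
  obtain ⟨k, hk⟩ := hk x hx
  exact ⟨k, _, hk, by simp⟩

theorem Step.comap {G H : Type*} [Group G] [Group H] {A B : Subgroup G}
    (h : Step A B) (f : H →* G) : Step (A.comap f) (B.comap f) := by
  obtain ⟨h1, h2, h3, h4⟩ := h
  exact ⟨inferInstance, inferInstance, Subgroup.comap_mono h3, h4.comap f⟩

theorem Step.map {G H : Type*} [Group G] [Group H] {A B : Subgroup G}
    (h : Step A B) (f : G →* H) (hf : Function.Surjective f) : Step (A.map f) (B.map f) := by
  obtain ⟨h1, h2, h3, h4⟩ := h
  exact ⟨h1.map f hf, h2.map f hf, Subgroup.map_mono h3, h4.map f⟩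

theorem Step.inf {G : Type*} [Group G] {A B : Subgroup G}
    (h : Step A B) (C : Subgroup G) [C.Normal] : Step (A ⊓ C) (B ⊓ C) := by
  obtain ⟨h1, h2, h3, h4⟩ := h
  refine ⟨inferInstance, inferInstance, inf_le_inf_right _ h3, ?_⟩
  obtain ⟨b, hb, hk⟩ := h4.mono (inf_le_left : B ⊓ C ≤ B)
  refine ⟨b, hb, fun x hx => ?_⟩
  obtain ⟨k, hk⟩ := hk x hx
  exact ⟨k, hk, C.mul_mem hx.2 (C.inv_mem (C.zpow_mem hb.2 k))⟩

theorem SSf.comap {G H : Type*} [Group G] [Group H] {N : Subgroup G} (h : SSf N)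
    (f : H →* G) : SSf (N.comap f) := by
  have := Relation.ReflTransGen.lift (p := Step) (Subgroup.comap f)
    (fun A B (h : Step A B) => h.comap f) _ _ h
  simpa [SSf, Function.onFun] using this

theorem SSf.map {G H : Type*} [Group G] [Group H] {N : Subgroup G} (h : SSf N)
    (f : G →* H) (hf : Function.Surjective f) : SSf (N.map f) := by
  have := Relation.ReflTransGen.lift (p := Step) (Subgroup.map f)
    (fun A B (h : Step A B) => h.map f hf) _ _ h
  simpa [SSf, Function.onFun, Subgroup.map_top_of_surjective f hf] using this

theorem SSf.inf {G : Type*} [Group G] {A B : Subgroup G} [B.Normal] (hA : SSf A) (hB : SSf B) :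
    SSf (A ⊓ B) := by
  have := Relation.ReflTransGen.lift (p := Step) (fun X => X ⊓ B)
    (fun X Y (h : Step X Y) => h.inf B) _ _ hA
  simp only [Function.onFun, top_inf_eq] at this
  exact this.trans hB

theorem ssf_top {G : Type*} [Group G] : SSf (⊤ : Subgroup G) := Relation.ReflTransGen.refl

theorem SSf.mono {G : Type*} [Group G] {A B : Subgroup G} [B.Normal] (hA : SSf A)
    (h : A ≤ B) : SSf B := by
  have := (hA.map (QuotientGroup.mk' B) (QuotientGroup.mk'_surjective B)).comap
    (QuotientGroup.mk' B)
  rwa [QuotientGroup.comap_map_mk', sup_eq_left.2 h] at this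

theorem isCyclic_sub_iff {G : Type*} [Group G] (A B : Subgroup G) [hA : A.Normal] :
    (haveI := hA.subgroupOf B; IsCyclic (↥B ⧸ (A.subgroupOf B))) ↔ Cyc A B := by
  haveI := hA.subgroupOf B
  constructor
  · rintro ⟨⟨b, h⟩⟩
    obtain ⟨b, rfl⟩ := QuotientGroup.mk_surjective b
    refine ⟨b, b.2, fun x hx => ?_⟩
    obtain ⟨k, hk⟩ := h (QuotientGroup.mk ⟨x, hx⟩)
    refine ⟨k, ?_⟩
    have hk : ((⟨x, hx⟩ * (b ^ k)⁻¹ : B) : ↥B ⧸ (A.subgroupOf B)) = 1 := by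
      simp only [QuotientGroup.mk_mul, QuotientGroup.mk_inv, QuotientGroup.mk_zpow,
        mul_inv_eq_one]
      exact hk.symm
    rw [QuotientGroup.eq_one_iff, Subgroup.mem_subgroupOf] at hk
    simpa using hk
  · rintro ⟨b, hb, h⟩
    refine ⟨⟨QuotientGroup.mk ⟨b, hb⟩, fun x => ?_⟩⟩
    obtain ⟨x, rfl⟩ := QuotientGroup.mk_surjective x
    obtain ⟨k, hk⟩ := h x x.2
    refine ⟨k, ?_⟩
    have hk : ((x * (⟨b, hb⟩ ^ k)⁻¹ : B) : ↥B ⧸ (A.subgroupOf B)) = 1 := by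
      rw [QuotientGroup.eq_one_iff, Subgroup.mem_subgroupOf]
      simpa using hk
    simp only [QuotientGroup.mk_mul, QuotientGroup.mk_inv, QuotientGroup.mk_zpow,
        mul_inv_eq_one] at hk
    exact hk.symm

theorem exists_seq {α : Type*} {r : α → α → Prop} {a b : α} (h : Relation.ReflTransGen r a b) :
    ∃ (n : ℕ) (f : ℕ → α), f 0 = a ∧ f n = b ∧ ∀ i < n, r (f i) (f (i + 1)) := by
  induction h with
  | refl => exact ⟨0, fun _ => a, rfl, rfl, by simp⟩
  | @tail b c _ hbc ih =>
    obtain ⟨n, f, h0, hn, hf⟩ := ih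
    refine ⟨n + 1, fun i => if i ≤ n then f i else c, by simp [h0], by simp, fun i hi => ?_⟩
    rcases Nat.lt_succ_iff_lt_or_eq.1 hi with h | rfl
    · have h1 : i ≤ n := h.le
      have h2 : i + 1 ≤ n := h
      simp only [h1, h2, if_true]
      exact hf i h
    · simp [hn, hbc]

theorem ss_iff {G : Type*} [Group G] : IsSupersoluble G ↔ SSf (⊥ : Subgroup G) := by
  constructor
  · rintro ⟨n, c, hc, h0, hn, h⟩
    have : ∀ i, Relation.ReflTransGen Step (⊥ : Subgroup G) (c i) := by
      intro i
      induction i using Fin.induction with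
      | zero => rw [h0]
      | succ i ih =>
        refine ih.tail ⟨hc _, hc _, (h i).1, ?_⟩
        haveI := hc i.castSucc
        exact (isCyclic_sub_iff _ _).1 (h i).2
    have := this (Fin.last n)
    rwa [hn] at this
  · intro h
    obtain ⟨n, f, h0, hn, hf⟩ := exists_seq h
    have hnorm : ∀ i ≤ n, (f i).Normal := by
      intro i hi
      rcases hi.lt_or_eq with h | rfl
      · exact (hf i h).1
      · rw [hn]; infer_instance
    refine ⟨n, fun i => f i, fun i => hnorm i (Nat.lt_succ_iff.1 i.2), by simpa using h0,
      by simpa using hn, fun i => ?_⟩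
    obtain ⟨h1, h2, h3, h4⟩ := hf i i.2
    refine ⟨h3, ?_⟩
    exact (isCyclic_sub_iff (f i) (f (i + 1))).2 h4

theorem ss_quot_iff {G : Type*} [Group G] (N : Subgroup G) [N.Normal] :
    IsSupersoluble (G ⧸ N) ↔ SSf N := by
  rw [ss_iff]
  constructor
  · intro h
    have := h.comap (QuotientGroup.mk' N)
    rwa [MonoidHom.comap_bot, QuotientGroup.ker_mk'] at this
  · intro h
    have := h.map (QuotientGroup.mk' N) (QuotientGroup.mk'_surjective N)
    rwa [QuotientGroup.map_mk'_self] at this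

theorem ss_of_inj {G H : Type*} [Group G] [Group H] (h : IsSupersoluble G) (f : H →* G)
    (hf : Function.Injective f) : IsSupersoluble H := by
  rw [ss_iff] at *
  have := h.comap f
  rwa [MonoidHom.comap_bot, (MonoidHom.ker_eq_bot_iff f).2 hf] at this

theorem ss_of_surj {G H : Type*} [Group G] [Group H] (h : IsSupersoluble G) (f : G →* H)
    (hf : Function.Surjective f) : IsSupersoluble H := by
  rw [ss_iff] at *
  have := h.map f hf
  rwa [Subgroup.map_bot] at this

theorem ss_of_cyclic {G : Type*} [Group G] (N : Subgroup G) [N.Normal] [hc : IsCyclic N]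
    (h : SSf N) : IsSupersoluble G := by
  rw [ss_iff]
  refine Relation.ReflTransGen.head ⟨inferInstance, inferInstance, bot_le, ?_⟩ h
  obtain ⟨⟨g, hg⟩⟩ := hc
  refine ⟨g, g.2, fun x hx => ?_⟩
  obtain ⟨k, hk⟩ := hg ⟨x, hx⟩
  refine ⟨k, ?_⟩
  have := congrArg Subtype.val hk
  simp only [Subgroup.coe_zpow] at this
  simp [this]

theorem ss_of_isCyclic {G : Type*} [Group G] [IsCyclic G] : IsSupersoluble G :=
  haveI : IsCyclic (⊤ : Subgroup G) := isCyclic_of_injective _ (Subgroup.subtype_injective _)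
  ss_of_cyclic ⊤ ssf_top

/-- A nontrivial normal subgroup of a supersoluble group contains a normal subgroup of prime
order. -/
theorem exists_prime_normal {G : Type*} [Group G] [Finite G] (h : IsSupersoluble G)
    (K : Subgroup G) [K.Normal] (hK : K ≠ ⊥) :
    ∃ (q : ℕ) (Q : Subgroup G), q.Prime ∧ Q.Normal ∧ Q ≤ K ∧ Nat.card Q = q := by
  rw [ss_iff] at h
  have key : ∀ B : Subgroup G, Relation.ReflTransGen Step ⊥ B → K ⊓ B ≠ ⊥ →
      ∃ C : Subgroup G, C.Normal ∧ C ≠ ⊥ ∧ C ≤ K ∧ IsCyclic C := by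
    intro B hB
    induction hB with
    | refl => simp
    | @tail A B hA hAB ih =>
      intro hne
      by_cases hz : K ⊓ A = ⊥
      · obtain ⟨h1, h2, h3, h4⟩ := hAB.inf K
        refine ⟨B ⊓ K, h2, by rwa [inf_comm], inf_le_right, ?_⟩
        obtain ⟨b, hb, hk⟩ := h4
        refine ⟨⟨⟨b, hb⟩, ?_⟩⟩
        rintro ⟨x, hx⟩
        obtain ⟨k, hk⟩ := hk x hx
        rw [inf_comm, hz, Subgroup.mem_bot, mul_inv_eq_one] at hk
        exact ⟨k, Subtype.ext (by simp [hk])⟩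
      · exact ih hz
  obtain ⟨C, hC, hC1, hCK, hcyc⟩ := key ⊤ h (by simpa using hK)
  obtain ⟨q, hq, hqC⟩ := Nat.exists_prime_and_dvd (n := Nat.card C)
    (by rwa [Ne, Subgroup.card_eq_one])
  haveI := Fact.mk hq
  obtain ⟨x, hx⟩ := exists_prime_orderOf_dvd_card' q hqC
  refine ⟨q, (Subgroup.zpowers x).map C.subtype, hq, ?_, ?_, ?_⟩
  · refine ⟨?_⟩
    rintro _ ⟨y, ⟨k, rfl⟩, rfl⟩ g
    obtain ⟨m, hm⟩ := MonoidHom.map_cyclic ((MulAut.conjNormal g : MulAut C) : C →* C)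
    refine ⟨(x ^ k) ^ m, Subgroup.zpow_mem _ (Subgroup.zpow_mem_zpowers x k) m, ?_⟩
    rw [← hm]
    simp
  · exact (Subgroup.map_subtype_le _).trans hCK
  · rw [Subgroup.card_map_of_injective (Subgroup.subtype_injective _), Nat.card_zpowers, hx]

theorem prime_cyc {G : Type*} [Group G] {p : ℕ} (hp : p.Prime) (h : Nat.card G = p) :
    IsCyclic G := by
  haveI := Fact.mk hp
  exact isCyclic_of_prime_card h

theorem ss_solvable : ∀ (n : ℕ) (G : Type*) [Group G] [Finite G], Nat.card G = n →
    IsSupersoluble G → Group.IsSolvable G := by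
  intro n
  induction n using Nat.strong_induction_on with
  | _ n ih =>
  intro G _ _ hn h
  by_cases ht : (⊤ : Subgroup G) = ⊥
  · haveI : Subsingleton G := by
      rw [← Subgroup.subsingleton_iff]; exact subsingleton_of_bot_eq_top ht.symm
    infer_instance
  obtain ⟨q, Q, hq, hQ, -, hc⟩ := exists_prime_normal h ⊤ ht
  haveI := prime_cyc hq hc
  have hlt : Nat.card (G ⧸ Q) < n := by
    rw [← hn, Subgroup.card_eq_card_quotient_mul_card_subgroup Q, hc]
    have := hq.two_le
    have := Nat.card_pos (α := G ⧸ Q)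
    nlinarith
  have hsol := ih _ hlt (G ⧸ Q) rfl (ss_of_surj h (QuotientGroup.mk' Q) (QuotientGroup.mk'_surjective Q))
  haveI : Group.IsSolvable Q := by
    letI : CommGroup Q := IsCyclic.commGroup
    infer_instance
  exact (Group.isSolvable_iff_subgroup_quotient Q).2 ⟨inferInstance, hsol⟩


theorem card_map_mul {G H : Type*} [Group G] [Group H] (f : G →* H) (K : Subgroup G) :
    Nat.card K = Nat.card (K.map f) * Nat.card (f.ker ⊓ K : Subgroup G) := by
  rw [← Subgroup.relIndex_ker, mul_comm, ← Subgroup.inf_relIndex_right, Subgroup.relIndex,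
    ← Nat.card_congr (Subgroup.subgroupOfEquivOfLe
      (inf_le_right : f.ker ⊓ K ≤ K)).toEquiv, Subgroup.card_mul_index]

theorem pow_card_mem {G : Type*} [Group G] {H : Subgroup G} {x : G} (hx : x ∈ H) :
    x ^ Nat.card H = 1 := by
  have := congrArg Subtype.val (pow_card_eq_one' (x := (⟨x, hx⟩ : H)))
  simpa only [Subgroup.coe_pow, Subgroup.coe_one] using this

/-- The subgroup generated by commutators and `(p-1)`-th powers. -/
def W (p : ℕ) (G : Type*) [Group G] : Subgroup G :=
  Subgroup.closure {x | (∃ a b : G, x = a * b * a⁻¹ * b⁻¹) ∨ ∃ a : G, x = a ^ (p - 1)}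

theorem comm_mem_W (p : ℕ) {G : Type*} [Group G] (a b : G) : a * b * a⁻¹ * b⁻¹ ∈ W p G :=
  Subgroup.subset_closure (Or.inl ⟨a, b, rfl⟩)

theorem pow_mem_W (p : ℕ) {G : Type*} [Group G] (a : G) : a ^ (p - 1) ∈ W p G :=
  Subgroup.subset_closure (Or.inr ⟨a, rfl⟩)

instance W_normal (p : ℕ) (G : Type*) [Group G] : (W p G).Normal := by
  refine ⟨fun x hx g => ?_⟩
  have : g * x * g⁻¹ = (g * x * g⁻¹ * x⁻¹) * x := by simp
  rw [this]
  exact mul_mem (comm_mem_W p g x) hx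

theorem W_map (p : ℕ) {G H : Type*} [Group G] [Group H] (f : G →* H)
    (hf : Function.Surjective f) : (W p G).map f = W p H := by
  apply le_antisymm
  · rw [Subgroup.map_le_iff_le_comap, W, Subgroup.closure_le]
    rintro x (⟨a, b, rfl⟩ | ⟨a, rfl⟩)
    · simpa using comm_mem_W p (f a) (f b)
    · simpa using pow_mem_W p (f a)
  · rw [W, Subgroup.closure_le]
    rintro x (⟨a, b, rfl⟩ | ⟨a, rfl⟩)
    · obtain ⟨a, rfl⟩ := hf a
      obtain ⟨b, rfl⟩ := hf b
      exact ⟨_, comm_mem_W p a b, by simp⟩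
    · obtain ⟨a, rfl⟩ := hf a
      exact ⟨_, pow_mem_W p a, map_pow f a _⟩

theorem W_le_ker {p : ℕ} {G A : Type*} [Group G] [CommGroup A] (f : G →* A)
    (h : ∀ a : A, a ^ (p - 1) = 1) : W p G ≤ f.ker := by
  rw [W, Subgroup.closure_le]
  rintro x (⟨a, b, rfl⟩ | ⟨a, rfl⟩)
  · simp [MonoidHom.mem_ker]
  · simp [MonoidHom.mem_ker, h]

theorem W_cent {p : ℕ} (hp : p.Prime) {G : Type*} [Group G] (N : Subgroup G) [N.Normal]
    (hN : Nat.card N = p) {w : G} (hw : w ∈ W p G) {n : G} (hn : n ∈ N) : w * n = n * w := by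
  haveI := Fact.mk hp
  haveI := prime_cyc hp hN
  let e : MulAut N ≃* (ZMod (Nat.card N))ˣ := IsCyclic.mulAutMulEquiv N
  have h := W_le_ker (p := p) (e.toMonoidHom.comp (MulAut.conjNormal (H := N))) (by
    rw [hN]; exact ZMod.units_pow_card_sub_one_eq_one p) hw
  rw [MonoidHom.mem_ker] at h
  have h : e (MulAut.conjNormal w) = 1 := h
  rw [map_eq_one_iff e e.injective] at h
  have := congrArg Subtype.val (DFunLike.congr_fun h ⟨n, hn⟩)
  simp only [MulAut.conjNormal_apply, MulAut.one_apply] at this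
  rw [mul_inv_eq_iff_eq_mul] at this
  exact this

theorem dvd_of_dvd_index_W {p q : ℕ} {G : Type*} [Group G] [Finite G] (hq : q.Prime)
    (h : q ∣ (W p G).index) : q ∣ p - 1 := by
  haveI := Fact.mk hq
  rw [Subgroup.index] at h
  obtain ⟨x, hx⟩ := exists_prime_orderOf_dvd_card' q h
  obtain ⟨x, rfl⟩ := QuotientGroup.mk_surjective x
  rw [← hx]
  apply orderOf_dvd_of_pow_eq_one
  rw [← QuotientGroup.mk_pow, QuotientGroup.eq_one_iff]
  exact pow_mem_W p x

theorem not_dvd_index_W {p : ℕ} (hp : p.Prime) {G : Type*} [Group G] [Finite G] :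
    ¬ p ∣ (W p G).index := fun h => by
  have := Nat.le_of_dvd (by have := hp.two_le; omega) (dvd_of_dvd_index_W hp h)
  have := hp.two_le
  omega

theorem W_eq_top {p : ℕ} (hp : p.Prime) {G : Type*} [Group G] [Finite G]
    (h : ∀ q : ℕ, q.Prime → q ∣ Nat.card G → p ≤ q) : W p G = ⊤ := by
  rw [← Subgroup.index_eq_one]
  by_contra hne
  obtain ⟨q, hq, hd⟩ := Nat.exists_prime_and_dvd hne
  have h1 := h q hq (hd.trans (Subgroup.index_dvd_card _))
  have := Nat.le_of_dvd (by have := hp.two_le; omega) (dvd_of_dvd_index_W hq hd)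
  have := hp.two_le
  omega

theorem pcompl {p : ℕ} (hp : p.Prime) : ∀ (n : ℕ) (G : Type*) [Group G] [Finite G],
    Nat.card G = n → IsSupersoluble G →
    ∃ K : Subgroup G, K.Normal ∧ K ≤ W p G ∧ ¬ p ∣ Nat.card K ∧
      ∃ k : ℕ, Nat.card (W p G) = Nat.card K * p ^ k := by
  intro n
  induction n using Nat.strong_induction_on with
  | _ n ih =>
  intro G _ _ hn h
  by_cases ht : (⊤ : Subgroup G) = ⊥
  · refine ⟨⊥, inferInstance, bot_le, by simpa using hp.one_lt.ne', 0, ?_⟩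
    have : W p G = ⊥ := le_bot_iff.1 (le_top.trans ht.le)
    simp [this]
  obtain ⟨q, N, hq, hN, -, hc⟩ := exists_prime_normal h ⊤ ht
  have hlt : Nat.card (G ⧸ N) < n := by
    rw [← hn, Subgroup.card_eq_card_quotient_mul_card_subgroup N, hc]
    have := hq.two_le
    have := Nat.card_pos (α := G ⧸ N)
    nlinarith
  have hsurj := QuotientGroup.mk'_surjective N
  obtain ⟨K', hK', hKW, hpK, k, hk⟩ := ih _ hlt (G ⧸ N) rfl (ss_of_surj h _ hsurj)
  set f := QuotientGroup.mk' N with hf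
  rw [← W_map p f hsurj] at hKW hk
  set T := K'.comap f ⊓ W p G with hT
  set A := N ⊓ W p G with hA
  have hker : f.ker = N := QuotientGroup.ker_mk' N
  have hmapT : T.map f = K' := by
    apply le_antisymm
    · exact (Subgroup.map_mono inf_le_left).trans (Subgroup.map_comap_le _ _)
    · intro x hx
      obtain ⟨w, hw, rfl⟩ := hKW hx
      exact ⟨w, ⟨hx, hw⟩, rfl⟩
  have hNT : N ≤ K'.comap f := by
    exact hker.ge.trans (Subgroup.comap_mono (f := f) bot_le)
  have hAT : f.ker ⊓ T = A := by
    rw [hker, hT, ← inf_assoc, inf_eq_left.2 hNT]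
  have cT : Nat.card T = Nat.card K' * Nat.card A := by
    rw [card_map_mul f T, hmapT, hAT]
  have cW : Nat.card (W p G) = Nat.card T * p ^ k := by
    rw [card_map_mul f (W p G), hk, hker, cT]; ring
  by_cases hpA : p ∣ Nat.card A
  · have hAq : Nat.card A ∣ q := by rw [← hc]; exact Subgroup.card_dvd_of_le inf_le_left
    have cA : Nat.card A = p := by
      rcases (Nat.dvd_prime hq).1 hAq with h1 | h1
      · rw [h1] at hpA; exact absurd (Nat.dvd_one.1 hpA) hp.one_lt.ne'
      · rw [h1] at hpA ⊢; exact ((Nat.prime_dvd_prime_iff_eq hp hq).1 hpA).symm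
    have hAleT : A ≤ T := hAT ▸ inf_le_right
    have cA' : Nat.card (A.subgroupOf T) = p := by
      rw [Nat.card_congr (Subgroup.subgroupOfEquivOfLe hAleT).toEquiv, cA]
    have hidx : (A.subgroupOf T).index = Nat.card K' := by
      have h1 := Subgroup.card_mul_index (A.subgroupOf T)
      rw [cA', cT, cA, mul_comm] at h1
      exact Nat.eq_of_mul_eq_mul_right hp.pos h1
    have hcop : Nat.Coprime (Nat.card (A.subgroupOf T)) (A.subgroupOf T).index := by
      rw [cA', hidx]; exact (Nat.Prime.coprime_iff_not_dvd hp).2 hpK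
    obtain ⟨C, hC⟩ := Subgroup.exists_right_complement'_of_coprime hcop
    have cC : Nat.card C = Nat.card K' := by
      have h1 := hC.card_mul_card
      rw [cA', cT, cA, mul_comm] at h1
      exact Nat.eq_of_mul_eq_mul_right hp.pos h1
    have cCm : Nat.card (C.map T.subtype) = Nat.card K' := by
      rw [Subgroup.card_map_of_injective (Subgroup.subtype_injective _), cC]
    refine ⟨C.map T.subtype, ⟨?_⟩, ?_, by rwa [cCm], k + 1, ?_⟩
    · rintro _ ⟨c, hc', rfl⟩ g
      have hgT : g * c * g⁻¹ ∈ T := by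
        haveI : T.Normal := by rw [hT]; infer_instance
        exact Normal.conj_mem inferInstance _ c.2 g
      have hpow : (g * c * g⁻¹) ^ Nat.card K' = 1 := by
        rw [conj_pow]
        have : c ^ Nat.card K' = 1 := by
          rw [← cC]
          exact pow_card_mem hc'
        have := congrArg Subtype.val this
        simp only [Subgroup.coe_pow, Subgroup.coe_one] at this
        simp [this]
      obtain ⟨⟨⟨a, ha⟩, ⟨c', hc''⟩⟩, hac⟩ := hC.2 ⟨_, hgT⟩
      have hac : (a : G) * c' = g * c * g⁻¹ := congrArg Subtype.val hac
      have haA : (a : G) ∈ A := ha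
      have hcomm : Commute (a : G) (c' : G) :=
        (W_cent hp A cA (c'.2 : (c' : G) ∈ T).2 haA).symm
      have hc1 : (c' : G) ^ Nat.card K' = 1 := by
        have : c' ^ Nat.card K' = 1 := by
          rw [← cC]
          exact pow_card_mem hc''
        have := congrArg Subtype.val this
        simpa using this
      rw [← hac, hcomm.mul_pow, hc1, mul_one] at hpow
      have hap : (a : G) ^ p = 1 := by
        rw [← cA]; exact pow_card_mem haA
      have ha1 : (a : G) = 1 := by
        have := (Nat.Prime.coprime_iff_not_dvd hp).2 hpK
        have h2 := pow_gcd_eq_one.2 ⟨hap, hpow⟩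
        rwa [this.gcd_eq_one, pow_one] at h2
      rw [Subgroup.coe_subtype, ← hac, ha1, one_mul]
      exact ⟨c', hc'', rfl⟩
    · exact (Subgroup.map_subtype_le _).trans inf_le_right
    · rw [cCm, cW, cT, cA]; ring
  · refine ⟨T, by rw [hT]; infer_instance, inf_le_right, ?_, k, cW⟩
    rw [cT, hp.dvd_mul]; tauto


theorem coprime_disjoint {p : ℕ} (hp : p.Prime) {G : Type*} [Group G] [Finite G]
    {K D : Subgroup G} (hK : ¬ p ∣ Nat.card K) (hD : IsPGroup p D) : Disjoint K D := by
  haveI := Fact.mk hp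
  rw [Subgroup.disjoint_def]
  intro x hx hx'
  obtain ⟨k, hk⟩ := hD ⟨x, hx'⟩
  have h1 : x ^ p ^ k = 1 := by
    have := congrArg Subtype.val hk
    simpa only [Subgroup.coe_pow, Subgroup.coe_one] using this
  have h2 := pow_gcd_eq_one.2 ⟨pow_card_mem hx, h1⟩
  have h3 : Nat.gcd (Nat.card K) (p ^ k) = 1 :=
    Nat.Coprime.pow_right k ((Nat.Prime.coprime_iff_not_dvd hp).2 hK).symm
  rwa [h3, pow_one] at h2

theorem sup_sylow_eq_top {p : ℕ} [Fact p.Prime] {G : Type*} [Group G] [Finite G]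
    (K : Subgroup G) (S : Sylow p G) {k : ℕ} (h : K.index = p ^ k) : K ⊔ S = ⊤ := by
  rw [← Subgroup.index_eq_one]
  have h1 : (K ⊔ S).index ∣ p ^ k := h ▸ Subgroup.index_dvd_of_le le_sup_left
  have h2 : (K ⊔ S).index ∣ (S : Subgroup G).index := Subgroup.index_dvd_of_le le_sup_right
  obtain ⟨j, -, hj⟩ := (Nat.dvd_prime_pow Fact.out).1 h1
  rcases Nat.eq_zero_or_pos j with rfl | hj0
  · simpa using hj
  · exact absurd ((dvd_pow_self p hj0.ne').trans (hj ▸ h2)) S.not_dvd_index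

theorem pnil_decomp {p : ℕ} [Fact p.Prime] {Y : Type*} [Group Y] [Finite Y]
    (hY : IsSupersoluble Y) (hmin : ∀ q : ℕ, q.Prime → q ∣ Nat.card Y → p ≤ q)
    (D : Subgroup Y) (hDn : D.Normal) (hD : IsPGroup p D) (S : Sylow p Y) (y : Y) :
    ∃ c s : Y, s ∈ S ∧ y = c * s ∧ ∀ d ∈ D, c * d = d * c := by
  have hp : p.Prime := Fact.out
  obtain ⟨K, hKn, -, hpK, k, hk⟩ := pcompl hp _ Y rfl hY
  rw [W_eq_top hp hmin] at hk
  have hidx : K.index = p ^ k := by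
    have := Subgroup.card_mul_index K
    rw [← Subgroup.card_top (G := Y), hk] at this
    exact Nat.eq_of_mul_eq_mul_left Nat.card_pos this
  have hy : y ∈ K ⊔ (S : Subgroup Y) := by
    rw [sup_sylow_eq_top K S hidx]; trivial
  obtain ⟨c, hc, s, hs, rfl⟩ := Subgroup.mem_sup_of_normal_left.1 hy
  refine ⟨c, s, hs, rfl, fun d hd => ?_⟩
  exact Subgroup.commute_of_normal_of_disjoint K D hKn hDn (coprime_disjoint hp hpK hD) c d hc hd

theorem mem_smul_sylow {p : ℕ} {G : Type*} [Group G] (P : Sylow p G) (g x : G) :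
    x ∈ g • P ↔ g⁻¹ * x * g ∈ P := by
  change x ∈ ((g • P : Sylow p G) : Subgroup G) ↔ g⁻¹ * x * g ∈ (P : Subgroup G)
  rw [Sylow.coe_subgroup_smul, Subgroup.mem_pointwise_smul_iff_inv_smul_mem]
  simp [MulAut.smul_def]

theorem exists_normalizer_gt {p : ℕ} [Fact p.Prime] {G : Type*} [Group G] [Finite G]
    (P : Sylow p G) (D : Subgroup G) (h : D < P) :
    ∃ x, x ∈ P ∧ x ∈ normalizer (D : Set G) ∧ x ∉ D := by
  haveI : Group.IsNilpotent P := P.2.isNilpotent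
  have hnc : NormalizerCondition P := Group.normalizerCondition_of_isNilpotent
  have hlt : D.subgroupOf P < ⊤ := by
    rw [lt_top_iff_ne_top, Ne, Subgroup.subgroupOf_eq_top]
    exact fun h' => absurd h' (not_le_of_gt h)
  obtain ⟨x, hx, hxD⟩ := SetLike.exists_of_lt (hnc _ hlt)
  refine ⟨x, x.2, ?_, fun h => hxD h⟩
  rw [Subgroup.mem_normalizer_iff] at hx ⊢
  intro d
  constructor
  · intro hd
    exact (hx ⟨d, h.le hd⟩).1 hd
  · intro hd
    have hdP : d ∈ (P : Subgroup G) := by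
      have := mul_mem (mul_mem (inv_mem x.2) (h.le hd)) x.2
      have e : (x : G)⁻¹ * (x * d * (x : G)⁻¹) * x = d := by group
      rwa [e] at this
    exact (hx ⟨d, hdP⟩).2 hd

theorem fusion {p : ℕ} [Fact p.Prime] {G : Type*} [Group G] [Finite G]
    (hss : ∀ Y : Subgroup G, Y ≠ ⊤ → IsSupersoluble Y)
    (hsimple : ∀ N : Subgroup G, N.Normal → N = ⊥ ∨ N = ⊤)
    (hmin : ∀ q : ℕ, q.Prime → q ∣ Nat.card G → p ≤ q) :
    ∀ (n : ℕ) (P Q : Sylow p G), Nat.card G - Nat.card (P ⊓ Q : Subgroup G) = n →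
      ∃ c : G, (∀ d, d ∈ P → d ∈ Q → c * d = d * c) ∧ c • P = Q := by
  intro n
  induction n using Nat.strong_induction_on with
  | _ n ih =>
  intro P Q hn
  by_cases hPQ : P = Q
  · subst hPQ
    exact ⟨1, by simp, by simp⟩
  set D : Subgroup G := P ⊓ Q with hD
  by_cases hDb : D = ⊥
  · obtain ⟨c, hc⟩ := MulAction.exists_smul_eq G P Q
    refine ⟨c, fun d h1 h2 => ?_, hc⟩
    have : d ∈ D := ⟨h1, h2⟩
    rw [hDb, Subgroup.mem_bot] at this
    simp [this]
  have hDP : D < P := by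
    refine lt_of_le_of_ne inf_le_left fun h => hPQ ?_
    exact Sylow.ext (P.3 Q.2 (inf_eq_left.1 h)).symm
  have hDQ : D < Q := by
    refine lt_of_le_of_ne inf_le_right fun h => hPQ ?_
    exact Sylow.ext (Q.3 P.2 (inf_eq_right.1 h))
  set Y : Subgroup G := normalizer (D : Set G) with hYdef
  have hDY : D ≤ Y := Subgroup.le_normalizer
  have hYtop : Y ≠ ⊤ := by
    intro h
    rcases hsimple D (Subgroup.normalizer_eq_top_iff.1 h) with h | h
    · exact hDb h
    · exact absurd le_top (not_le_of_gt (h ▸ hDP))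
  obtain ⟨x1, hx1P, hx1Y, hx1D⟩ := exists_normalizer_gt P D hDP
  obtain ⟨x2, hx2Q, hx2Y, hx2D⟩ := exists_normalizer_gt Q D hDQ
  have hpP : IsPGroup p ((P : Subgroup G).subgroupOf Y) := P.2.comap_subtype
  have hpQ : IsPGroup p ((Q : Subgroup G).subgroupOf Y) := Q.2.comap_subtype
  obtain ⟨S1, hS1⟩ := hpP.exists_le_sylow
  obtain ⟨S2, hS2⟩ := hpQ.exists_le_sylow
  obtain ⟨y, hy⟩ := MulAction.exists_smul_eq Y S1 S2
  have hDpg : IsPGroup p (D.subgroupOf Y) := (P.2.to_le inf_le_left).comap_subtype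
  obtain ⟨c, s, hs, rfl, hc⟩ := pnil_decomp (hss Y hYtop)
    (fun q hq hqd => hmin q hq (hqd.trans (Subgroup.card_subgroup_dvd_card Y)))
    (D.subgroupOf Y) Subgroup.normal_in_normalizer hDpg S1 y
  have hsS : s • S1 = S1 := Sylow.smul_eq_iff_mem_normalizer.2 (Subgroup.le_normalizer hs)
  rw [mul_smul, hsS] at hy
  obtain ⟨P1, hP1⟩ := (S1.2.map Y.subtype).exists_le_sylow
  have hcD : ∀ d ∈ D, (c : G) * d = d * c := fun d hd =>
    congrArg Subtype.val (hc ⟨d, hDY hd⟩ hd)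
  have hPP1 : ∀ x ∈ P, x ∈ Y → x ∈ P1 := fun x hx hxY =>
    hP1 ⟨⟨x, hxY⟩, hS1 (show (⟨x, hxY⟩ : Y) ∈ (P : Subgroup G).subgroupOf Y from hx), rfl⟩
  have hQP2 : ∀ x ∈ Q, x ∈ Y → x ∈ (c : G) • P1 := fun x hx hxY => by
    have h1 : (⟨x, hxY⟩ : Y) ∈ S2 :=
      hS2 (show (⟨x, hxY⟩ : Y) ∈ (Q : Subgroup G).subgroupOf Y from hx)
    rw [← hy, mem_smul_sylow] at h1
    rw [mem_smul_sylow]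
    exact hP1 ⟨_, h1, rfl⟩
  have hlt : ∀ (A B : Sylow p G), D < (A ⊓ B : Subgroup G) →
      Nat.card G - Nat.card (A ⊓ B : Subgroup G) < n := by
    intro A B hAB
    have h1 : Nat.card D < Nat.card (A ⊓ B : Subgroup G) := by
      refine lt_of_le_of_ne (Subgroup.card_le_of_le hAB.le) fun h => hAB.ne ?_
      exact Subgroup.eq_of_le_of_card_ge hAB.le h.ge
    have h2 := Subgroup.card_le_card_group (A ⊓ B : Subgroup G)
    omega
  obtain ⟨c1, hc1, hc1'⟩ := ih _ (hlt P P1 (by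
    refine lt_of_le_of_ne (le_inf hDP.le fun d hd => hPP1 d (hDP.le hd) (hDY hd)) fun h => ?_
    rw [h] at hx1D
    exact hx1D ⟨hx1P, hPP1 _ hx1P hx1Y⟩)) P P1 rfl
  obtain ⟨c2, hc2, hc2'⟩ := ih _ (hlt ((c : G) • P1) Q (by
    refine lt_of_le_of_ne (le_inf (fun d hd => hQP2 d (hDQ.le hd) (hDY hd)) hDQ.le) fun h => ?_
    rw [h] at hx2D
    exact hx2D ⟨hQP2 _ hx2Q hx2Y, hx2Q⟩)) ((c : G) • P1) Q rfl
  refine ⟨c2 * (c * c1), fun d h1 h2 => ?_, by rw [mul_smul, mul_smul, hc1', hc2']⟩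
  have hd : d ∈ D := ⟨h1, h2⟩
  have e1 : Commute c1 d := hc1 d h1 (hPP1 d h1 (hDY hd))
  have e2 : Commute (c : G) d := hcD d hd
  have e3 : Commute c2 d := hc2 d (hQP2 d h2 (hDY hd)) h2
  exact e3.mul_left (e2.mul_left e1)

theorem control {p : ℕ} [Fact p.Prime] {G : Type*} [Group G] [Finite G]
    (hss : ∀ Y : Subgroup G, Y ≠ ⊤ → IsSupersoluble Y)
    (hsimple : ∀ N : Subgroup G, N.Normal → N = ⊥ ∨ N = ⊤)
    (hmin : ∀ q : ℕ, q.Prime → q ∣ Nat.card G → p ≤ q)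
    (P : Sylow p G) (hPb : (P : Subgroup G) ≠ ⊥) (hPt : (P : Subgroup G) ≠ ⊤) (x g : G) (hx : x ∈ P)
    (hg : g⁻¹ * x * g ∈ P) : ∃ s ∈ P, x = s * (g⁻¹ * x * g) * s⁻¹ := by
  obtain ⟨c, hc, hc'⟩ := fusion hss hsimple hmin _ (g • P) P rfl
  have hcx := hc x ((mem_smul_sylow _ _ _).2 hg) hx
  rw [← mul_smul, Sylow.smul_eq_iff_mem_normalizer] at hc'
  set Y : Subgroup G := normalizer ((P : Subgroup G) : Set G) with hY
  have hYtop : Y ≠ ⊤ := by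
    intro h
    rcases hsimple P (Subgroup.normalizer_eq_top_iff.1 h) with h | h
    · exact hPb h
    · exact hPt h
  have hPY : (P : Subgroup G) ≤ Y := Subgroup.le_normalizer
  obtain ⟨a, s, hs, has, ha⟩ := pnil_decomp (hss Y hYtop)
    (fun q hq hqd => hmin q hq (hqd.trans (Subgroup.card_subgroup_dvd_card Y)))
    ((P : Subgroup G).subgroupOf Y) Subgroup.normal_in_normalizer P.2.comap_subtype
    (P.subtype hPY) ⟨c * g, hc'⟩
  have hsP : (s : G) ∈ P := hs
  have has : c * g = a * s := congrArg Subtype.val has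
  refine ⟨s, hsP, ?_⟩
  have hmem : (s : G) * (g⁻¹ * x * g) * (s : G)⁻¹ ∈ P := mul_mem (mul_mem hsP hg) (inv_mem hsP)
  have h1 : (a : G) * ((s : G) * (g⁻¹ * x * g) * (s : G)⁻¹)
      = ((s : G) * (g⁻¹ * x * g) * (s : G)⁻¹) * a :=
    congrArg Subtype.val (ha ⟨_, hPY hmem⟩ hmem)
  have h2 : (a : G) * ((s : G) * (g⁻¹ * x * g) * (s : G)⁻¹) * (a : G)⁻¹ = x := by
    have : (a : G) * ((s : G) * (g⁻¹ * x * g) * (s : G)⁻¹) * (a : G)⁻¹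
      = (a * s) * (g⁻¹ * x * g) * (a * s : G)⁻¹ := by group
    rw [this, ← has]
    have : (c * g) * (g⁻¹ * x * g) * (c * g)⁻¹ = c * x * c⁻¹ := by group
    rw [this, hcx]; group
  rw [h1, mul_inv_cancel_right] at h2
  exact h2.symm

theorem not_simple {G : Type*} [Group G] [Finite G]
    (hss : ∀ Y : Subgroup G, Y ≠ ⊤ → IsSupersoluble Y)
    (hsimple : ∀ N : Subgroup G, N.Normal → N = ⊥ ∨ N = ⊤) : IsSupersoluble G := by
  by_cases hc1 : Nat.card G = 1
  · haveI : Subsingleton G := (Nat.card_eq_one_iff_unique.1 hc1).1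
    exact ss_of_isCyclic
  by_contra hns
  have hcomm : commutator G = ⊤ := by
    refine (hsimple _ inferInstance).resolve_left fun h => hns ?_
    have hab : ∀ a b : G, a * b = b * a := by
      intro a b
      have : a * b * a⁻¹ * b⁻¹ ∈ commutator G :=
        Subgroup.commutator_mem_commutator (Subgroup.mem_top a) (Subgroup.mem_top b)
      rw [h, Subgroup.mem_bot, mul_inv_eq_one, mul_inv_eq_iff_eq_mul] at this
      exact this
    obtain ⟨x, hx⟩ : ∃ x : G, x ≠ 1 := by
      by_contra hall
      push Not at hall
      exact hc1 (Nat.card_eq_one_iff_exists.2 ⟨1, hall⟩)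
    have hn : (Subgroup.zpowers x).Normal := ⟨fun y hy g => by
      rw [hab g y, mul_inv_cancel_right]; exact hy⟩
    have ht : Subgroup.zpowers x = ⊤ :=
      (hsimple _ hn).resolve_left (by simpa [Subgroup.zpowers_eq_bot] using hx)
    haveI : IsCyclic G := ⟨⟨x, fun y => by
      have : y ∈ (⊤ : Subgroup G) := trivial
      rwa [← ht] at this⟩⟩
    exact ss_of_isCyclic
  set p := (Nat.card G).minFac with hpdef
  have hp : p.Prime := Nat.minFac_prime hc1
  haveI := Fact.mk hp
  have hmin : ∀ q : ℕ, q.Prime → q ∣ Nat.card G → p ≤ q := fun q hq hd =>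
    Nat.minFac_le_of_dvd hq.two_le hd
  obtain ⟨P⟩ : Nonempty (Sylow p G) := inferInstance
  have hPb : (P : Subgroup G) ≠ ⊥ := P.ne_bot_of_dvd_card (Nat.minFac_dvd _)
  haveI hPn : Group.IsNilpotent P := P.2.isNilpotent
  haveI : Nontrivial P := (Subgroup.nontrivial_iff_ne_bot _).2 hPb
  have hPt : (P : Subgroup G) ≠ ⊤ := by
    intro h
    have hl := Group.IsSolvable.commutator_lt_top_of_nontrivial P
    have hpg : IsPGroup p G := by
      have := P.2
      rw [h] at this
      exact this.of_equiv Subgroup.topEquiv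
    haveI : Group.IsNilpotent G := hpg.isNilpotent
    haveI : Nontrivial G := (Subgroup.subtype_injective (P : Subgroup G)).nontrivial
    have hl := Group.IsSolvable.commutator_lt_top_of_nontrivial G
    exact hl.ne hcomm
  let φ : P →* Abelianization P := Abelianization.of
  have htr : ∀ x (hx : x ∈ P), MonoidHom.transfer φ x = φ ⟨x, hx⟩ ^ (P : Subgroup G).index := by
    intro x hx
    classical
    letI := (P : Subgroup G).fintypeQuotientOfFiniteIndex
    rw [MonoidHom.transfer_eq_prod_quotient_orbitRel_zpowers_quot,
      Subgroup.index_eq_sum_minimalPeriod (P : Subgroup G) x, ← Finset.prod_pow_eq_pow_sum]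
    refine Finset.prod_congr rfl fun q _ => ?_
    have hmem := QuotientGroup.out_conj_pow_minimalPeriod_mem (P : Subgroup G) x q.out
    have hxk : x ^ Function.minimalPeriod (x • ·) q.out ∈ P := pow_mem hx _
    obtain ⟨s, hs, hse⟩ := control hss hsimple hmin P hPb hPt _ _ hxk hmem
    rw [← map_pow]
    have : (⟨x, hx⟩ : P) ^ Function.minimalPeriod (x • ·) q.out
        = ⟨s, hs⟩ * ⟨_, hmem⟩ * ⟨s, hs⟩⁻¹ := Subtype.ext hse
    rw [this, map_mul, map_mul, map_inv, mul_comm (φ ⟨s, hs⟩), mul_inv_cancel_right]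
  have hker : ∀ x : G, MonoidHom.transfer φ x = 1 := by
    intro x
    have h1 : commutator G ≤ (MonoidHom.transfer φ).ker := Abelianization.commutator_subset_ker _
    rw [hcomm] at h1
    exact h1 (Subgroup.mem_top x)
  have hall : commutator P = ⊤ := by
    rw [eq_top_iff]
    rintro ⟨x, hx⟩ -
    have h1 := htr x hx
    rw [hker] at h1
    obtain ⟨k, hk⟩ := P.2 ⟨x, hx⟩
    have h2 : φ ⟨x, hx⟩ ^ p ^ k = 1 := by rw [← map_pow, hk, map_one]
    have h3 := pow_gcd_eq_one.2 ⟨h1.symm, h2⟩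
    have h4 : Nat.gcd (P : Subgroup G).index (p ^ k) = 1 :=
      Nat.Coprime.pow_right k ((Nat.Prime.coprime_iff_not_dvd hp).2 P.not_dvd_index).symm
    rw [h4, pow_one] at h3
    rw [← Abelianization.ker_of]
    exact h3
  exact (Group.IsSolvable.commutator_lt_top_of_nontrivial P).ne hall


theorem exists_minNormal {X : Type*} [Group X] [Finite X] (K : Subgroup X) (hKn : K.Normal)
    (hK : K ≠ ⊥) : ∃ N ≤ K, IsMinimalNormal N := by
  obtain ⟨N, hNK, hN⟩ := Set.Finite.exists_le_minimal
    (s := {N : Subgroup X | N.Normal ∧ N ≠ ⊥}) (Set.toFinite _) ⟨hKn, hK⟩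
  refine ⟨N, hNK, hN.1.1, hN.1.2, fun M hM hMN hMb => ?_⟩
  exact le_antisymm hMN (hN.2 (show M ∈ _ from ⟨hM, hMb⟩) hMN)

/-- A normal property which has a nontrivial solution in a minimal normal subgroup
is satisfied everywhere on it. -/
theorem minNormal_ind {X : Type*} [Group X] {N : Subgroup X} (hN : IsMinimalNormal N)
    (P : X → Prop) (h1 : P 1) (hmul : ∀ x ∈ N, ∀ y ∈ N, P x → P y → P (x * y))
    (hinv : ∀ x ∈ N, P x → P x⁻¹) (hconj : ∀ x ∈ N, ∀ g, P x → P (g * x * g⁻¹))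
    (hex : ∃ x ∈ N, x ≠ 1 ∧ P x) : ∀ x ∈ N, P x := by
  have hNn := hN.1
  let M : Subgroup X :=
    { carrier := {x | x ∈ N ∧ P x}
      mul_mem' := fun {a b} ha hb => ⟨mul_mem ha.1 hb.1, hmul a ha.1 b hb.1 ha.2 hb.2⟩
      one_mem' := ⟨one_mem _, h1⟩
      inv_mem' := fun {a} ha => ⟨inv_mem ha.1, hinv a ha.1 ha.2⟩ }
  have hM : M = N := by
    refine hN.2.2 M ⟨fun x hx g => ⟨hNn.conj_mem x hx.1 g, hconj x hx.1 g hx.2⟩⟩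
      (fun x hx => hx.1) fun h => ?_
    obtain ⟨x, hx, hx1, hPx⟩ := hex
    have : x ∈ M := ⟨hx, hPx⟩
    rw [h, Subgroup.mem_bot] at this
    exact hx1 this
  intro x hx
  rw [← hM] at hx
  exact hx.2

theorem minAb {X : Type*} [Group X] [Finite X] {N : Subgroup X} (hN : IsMinimalNormal N)
    (hs : Group.IsSolvable N) : ∃ p : ℕ, p.Prime ∧ (∀ x ∈ N, ∀ y ∈ N, x * y = y * x) ∧
      ∀ x ∈ N, x ^ p = 1 := by
  have hNn := hN.1
  have hNt : Nontrivial N := (Subgroup.nontrivial_iff_ne_bot _).2 hN.2.1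
  have hcomm : ∀ x ∈ N, ∀ y ∈ N, x * y = y * x := by
    by_cases h : ⁅N, N⁆ = ⊥
    · intro x hx y hy
      have := Subgroup.commutator_mem_commutator hx hy
      rw [h, Subgroup.mem_bot, commutatorElement_def, mul_inv_eq_one, mul_inv_eq_iff_eq_mul] at this
      exact this
    · exfalso
      have h1 : ⁅N, N⁆ = N := hN.2.2 _ inferInstance (Subgroup.commutator_le_left N N) h
      have h2 : (commutator N).map N.subtype = (⊤ : Subgroup N).map N.subtype := by
        rw [commutator_def, Subgroup.map_commutator, ← MonoidHom.range_eq_map,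
          Subgroup.range_subtype, h1]
      exact (Group.IsSolvable.commutator_lt_top_of_nontrivial N).ne
        (Subgroup.map_injective N.subtype_injective h2)
  have hc1 : Nat.card N ≠ 1 := Finite.one_lt_card.ne'
  refine ⟨(Nat.card N).minFac, Nat.minFac_prime hc1, hcomm, ?_⟩
  set p := (Nat.card N).minFac with hp
  haveI := Fact.mk (Nat.minFac_prime hc1)
  refine minNormal_ind hN (fun x => x ^ p = 1) (one_pow _) ?_ ?_ ?_ ?_
  · intro x hx y hy h1 h2
    rw [(show Commute x y from hcomm x hx y hy).mul_pow, h1, h2, one_mul]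
  · intro x _ h; rw [inv_pow, h, inv_one]
  · intro x _ g h
    rw [conj_pow, h, mul_one, mul_inv_cancel]
  · obtain ⟨x, hx⟩ := exists_prime_orderOf_dvd_card' p (Nat.minFac_dvd (Nat.card N))
    refine ⟨x, x.2, ?_, ?_⟩
    · intro h
      have : x = 1 := Subtype.ext h
      rw [this, orderOf_one] at hx
      exact (Nat.minFac_prime hc1).one_lt.ne hx
    · have := pow_orderOf_eq_one x
      rw [hx] at this
      exact congrArg Subtype.val this

theorem pgroup_of_exp {p : ℕ} {X : Type*} [Group X] {N : Subgroup X} (h : ∀ x ∈ N, x ^ p = 1) :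
    IsPGroup p N := fun x => ⟨1, Subtype.ext (by simpa using h x x.2)⟩

theorem fixF {p : ℕ} [Fact p.Prime] {Y : Type*} [Group Y] [Finite Y] (D : Subgroup Y)
    [D.Normal] (hD : IsPGroup p D) (hDb : D ≠ ⊥) (V K : Subgroup Y)
    (hKc : ∀ k ∈ K, ∀ d ∈ D, k * d = d * k) {j : ℕ} (hj : K.relIndex V = p ^ j) :
    ∃ d ∈ D, d ≠ 1 ∧ ∀ w ∈ V, w * d = d * w := by
  obtain ⟨S⟩ : Nonempty (Sylow p V) := inferInstance
  have hsup := sup_sylow_eq_top (K.subgroupOf V) S hj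
  letI : MulAction S D := MulAction.compHom D
    ((MulAut.conjNormal (H := D)).comp (V.subtype.comp (S : Subgroup V).subtype))
  haveI : Nontrivial D := (Subgroup.nontrivial_iff_ne_bot _).2 hDb
  obtain ⟨n, hn0, hn⟩ := hD.nontrivial_iff_card.1 inferInstance
  have hs : ∀ (s : S) (d : D), ((s • d : D) : Y) = ((s : V) : Y) * d * ((s : V) : Y)⁻¹ := by
    intro s d
    exact MulAut.conjNormal_apply _ _
  obtain ⟨d, hd, hd1⟩ := S.2.exists_fixed_point_of_prime_dvd_card_of_fixed_point D
    (hn ▸ dvd_pow_self p hn0.ne') (a := (1 : D)) (fun s => Subtype.ext (by rw [hs]; simp))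
  refine ⟨d, d.2, fun h => hd1 (Subtype.ext h.symm), ?_⟩
  have hle : K.subgroupOf V ⊔ S ≤ (Subgroup.centralizer {(d : Y)}).subgroupOf V := by
    refine sup_le ?_ ?_
    · intro k hk
      rw [Subgroup.mem_subgroupOf, Subgroup.mem_centralizer_singleton_iff]
      exact hKc k hk d d.2
    · intro s hs'
      rw [Subgroup.mem_subgroupOf, Subgroup.mem_centralizer_singleton_iff]
      have := congrArg Subtype.val (hd ⟨s, hs'⟩)
      rw [hs, mul_inv_eq_iff_eq_mul] at this
      exact this
  rw [hsup] at hle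
  intro w hw
  have := hle (Subgroup.mem_top ⟨w, hw⟩)
  rwa [Subgroup.mem_subgroupOf, Subgroup.mem_centralizer_singleton_iff] at this

theorem cent_all {X : Type*} [Group X] {N : Subgroup X} (hN : IsMinimalNormal N)
    (V : Subgroup X) [hV : V.Normal] (h : ∃ d ∈ N, d ≠ 1 ∧ ∀ w ∈ V, w * d = d * w) :
    ∀ d ∈ N, ∀ w ∈ V, w * d = d * w := by
  refine minNormal_ind hN (fun d => ∀ w ∈ V, w * d = d * w) (by simp) ?_ ?_ ?_ h
  · intro x _ y _ h1 h2 w hw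
    exact Commute.mul_right (h1 w hw) (h2 w hw)
  · intro x _ h1 w hw
    exact Commute.inv_right (h1 w hw)
  · intro x _ g h1 w hw
    have h2 := h1 _ (hV.conj_mem w hw g⁻¹)
    calc w * (g * x * g⁻¹) = g * ((g⁻¹ * w * g⁻¹⁻¹) * x) * g⁻¹ := by group
      _ = _ := by rw [h2]; group

theorem minNormal_cyc {X : Type*} [Group X] {N : Subgroup X} (hN : IsMinimalNormal N)
    {d : X} (hd : d ∈ N) (hd1 : d ≠ 1) (h : ∀ g : X, g * d * g⁻¹ ∈ Subgroup.zpowers d) :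
    IsCyclic N := by
  have hn : (Subgroup.zpowers d).Normal := by
    refine ⟨fun x hx g => ?_⟩
    obtain ⟨k, rfl⟩ := hx
    change g * d ^ k * g⁻¹ ∈ _
    rw [← conj_zpow]
    exact zpow_mem (h g) k
  have : Subgroup.zpowers d = N := hN.2.2 _ hn (by simpa using hd) (by simpa using hd1)
  rw [← this]
  infer_instance

theorem eig_add {p : ℕ} (hp : p.Prime) {B : Type*} [AddCommGroup B] [Module (ZMod p) B] [Finite B]
    [Nontrivial B] (f : B →+ B) (hf : ∀ y, f^[p - 1] y = y) :
    ∃ (a : ℕ) (v : B), v ≠ 0 ∧ f v = a • v := by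
  haveI := Fact.mk hp
  let φ : Module.End (ZMod p) B := AddMonoidHom.toZModLinearMap p f
  have hφp : φ ^ (p - 1) = 1 := by
    apply LinearMap.ext
    intro y
    rw [Module.End.pow_apply]
    exact hf y
  have hφp' : φ ^ p = φ := by
    have : φ ^ p = φ ^ (p - 1 + 1) := by rw [Nat.sub_add_cancel hp.one_le]
    rw [this, pow_succ, hφp, one_mul]
  have hdvd : minpoly (ZMod p) φ ∣ Polynomial.X ^ p - Polynomial.X := by
    apply minpoly.dvd
    simp [hφp']
  have hspl : (Polynomial.X ^ p - Polynomial.X : Polynomial (ZMod p)).Splits := by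
    have := FiniteField.splits_X_pow_nat_card_sub_X p (K := ZMod p)
    simpa using this
  have hspl2 := hspl.of_dvd (FiniteField.X_pow_card_sub_X_ne_zero (ZMod p) hp.one_lt) hdvd
  haveI : Module.Finite (ZMod p) B := Module.Finite.of_finite
  obtain ⟨a, ha⟩ := hspl2.exists_eval_eq_zero
    (minpoly.degree_pos (Algebra.IsIntegral.isIntegral φ)).ne'
  obtain ⟨v, hv⟩ := (Module.End.hasEigenvalue_of_isRoot ha).exists_hasEigenvector
  refine ⟨a.val, v, hv.2, ?_⟩
  have h1 : φ v = a • v := hv.apply_eq_smul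
  have h2 : a • v = a.val • v := by
    rw [← Nat.cast_smul_eq_nsmul (ZMod p), ZMod.natCast_zmod_val]
  rw [h2] at h1
  exact h1

theorem eig_aux {p : ℕ} (hp : p.Prime) {A : Type*} [CommGroup A] [Finite A] [Nontrivial A]
    (hexp : ∀ y : A, y ^ p = 1) (g : A →* A) (hg : ∀ y, g^[p - 1] y = y) :
    ∃ (a : ℕ) (n : A), n ≠ 1 ∧ g n = n ^ a := by
  letI : Module (ZMod p) (Additive A) := AddCommGroup.zmodModule (fun y =>
    show Additive.ofMul ((Additive.toMul y) ^ p) = 0 from by rw [hexp]; rfl)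
  exact eig_add hp (B := Additive A) (MonoidHom.toAdditive g) hg

theorem eig {p : ℕ} (hp : p.Prime) {X : Type*} [Group X] [Finite X] {N : Subgroup X}
    (hN : IsMinimalNormal N) (hab : ∀ x ∈ N, ∀ y ∈ N, x * y = y * x) (hexp : ∀ x ∈ N, x ^ p = 1)
    (hW : ∀ d ∈ N, ∀ w ∈ W p X, w * d = d * w) : IsCyclic N := by
  haveI := Fact.mk hp
  have hNn := hN.1
  haveI hNt : Nontrivial N := (Subgroup.nontrivial_iff_ne_bot _).2 hN.2.1
  have key : ∀ x : X, ∃ a : ℕ, ∃ n ∈ N, n ≠ 1 ∧ x * n * x⁻¹ = n ^ a := by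
    intro x
    letI : CommGroup N := { (inferInstance : Group N) with
      mul_comm := fun a b => Subtype.ext (hab a a.2 b b.2) }
    obtain ⟨a, n, hn, hna⟩ := eig_aux hp (A := N) (fun y => Subtype.ext (hexp _ y.2))
      (MulAut.conjNormal x).toMonoidHom (by
        have hk : ∀ (k : ℕ) (y : N), ((((MulAut.conjNormal x).toMonoidHom : N →* N)^[k] y : N) : X)
            = x ^ k * y * (x ^ k)⁻¹ := by
          intro k
          induction k with
          | zero => intro y; simp
          | succ k ih =>
            intro y
            rw [Function.iterate_succ_apply']
            have h := MulAut.conjNormal_apply x (((MulAut.conjNormal x).toMonoidHom : N →* N)^[k] y)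
            refine h.trans ?_
            rw [ih, pow_succ']
            group
        intro y
        apply Subtype.ext
        rw [hk, hW _ y.2 _ (pow_mem_W p x), mul_inv_cancel_right])
    refine ⟨a, n, n.2, fun h => hn (Subtype.ext h), ?_⟩
    have h1 := congrArg Subtype.val hna
    exact (MulAut.conjNormal_apply x n).symm.trans h1
  have key2 : ∀ x : X, ∃ a : ℕ, ∀ n ∈ N, x * n * x⁻¹ = n ^ a := by
    intro x
    obtain ⟨a, n, hn, hn1, hna⟩ := key x
    refine ⟨a, minNormal_ind hN (fun n => x * n * x⁻¹ = n ^ a) (by simp) ?_ ?_ ?_ ⟨n, hn, hn1, hna⟩⟩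
    · intro y hy z hz h1 h2
      rw [(show Commute y z from hab y hy z hz).mul_pow, ← h1, ← h2]; group
    · intro y hy h1
      rw [inv_pow, ← h1]; group
    · intro y hy g h1
      have h2 := hW _ (pow_mem (hNn.conj_mem y hy g) a) _ (comm_mem_W p x g)
      calc x * (g * y * g⁻¹) * x⁻¹
          = (x * g * x⁻¹ * g⁻¹) * (g * (x * y * x⁻¹) * g⁻¹) * (x * g * x⁻¹ * g⁻¹)⁻¹ := by group
        _ = _ := by rw [h1, ← conj_pow, h2, mul_inv_cancel_right]
  obtain ⟨⟨d, hd⟩, hd1⟩ := exists_ne (1 : N)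
  have hd1 : d ≠ 1 := fun h => hd1 (Subtype.ext h)
  refine minNormal_cyc hN hd hd1 fun g => ?_
  obtain ⟨a, ha⟩ := key2 g
  rw [ha d hd]
  exact Subgroup.npow_mem_zpowers d a


theorem frat_arg {q : ℕ} [Fact q.Prime] {X : Type*} [Group X] [Finite X] {E T : Subgroup X}
    [E.Normal] [T.Normal] (hE : E ≤ frattini X) {k : ℕ}
    (hidx : E.relIndex T = q ^ k) (P : Sylow q T) :
    ((P : Subgroup T).map T.subtype).Normal := by
  have hsup := sup_sylow_eq_top (E.subgroupOf T) P hidx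
  have hT : T ≤ E ⊔ (P : Subgroup T).map T.subtype := by
    have := congrArg (Subgroup.map T.subtype) hsup
    rw [Subgroup.map_sup, ← MonoidHom.range_eq_map, Subgroup.range_subtype] at this
    nth_rewrite 1 [← this]
    exact sup_le_sup_right (Subgroup.map_le_iff_le_comap.2 le_rfl) _
  have h1 := Sylow.normalizer_sup_eq_top P
  rw [← Subgroup.normalizer_eq_top_iff]
  apply frattini_nongenerating
  rw [eq_top_iff, ← h1]
  refine sup_le le_sup_left (hT.trans (sup_le (hE.trans le_sup_right) ?_))
  exact Subgroup.le_normalizer.trans le_sup_left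

theorem coatom_quot {X : Type*} [Group X] (N : Subgroup X) [N.Normal]
    (h : ∀ H : Subgroup X, IsCoatom H → N ≤ H → SSf H.normalCore) :
    ∀ H : Subgroup (X ⧸ N), IsCoatom H → SSf H.normalCore := by
  intro H hH
  have hs := QuotientGroup.mk'_surjective N
  have h1 := (h _ (Subgroup.isCoatom_comap_of_surjective hs hH)
    (QuotientGroup.le_comap_mk' N H)).map _ hs
  have hn : (Subgroup.map (QuotientGroup.mk' N)
    (Subgroup.comap (QuotientGroup.mk' N) H).normalCore).Normal :=
    (Subgroup.normalCore_normal _).map _ hs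
  refine h1.mono (Subgroup.normal_le_normalCore.2 ?_)
  rw [Subgroup.map_le_iff_le_comap]
  exact Subgroup.normalCore_le _

theorem card_quot_lt {X : Type*} [Group X] [Finite X] {N : Subgroup X} (hN : N ≠ ⊥) :
    Nat.card (X ⧸ N) < Nat.card X := by
  have h1 := Subgroup.card_mul_index N
  have h2 : 1 < Nat.card N := by
    haveI := (Subgroup.nontrivial_iff_ne_bot _).2 hN
    exact Finite.one_lt_card
  have h3 : 0 < N.index := Nat.pos_of_ne_zero N.index_ne_zero_of_finite
  change N.index < _
  nlinarith

theorem Hup : ∀ (n : ℕ) (X : Type*) [Group X] [Finite X], Nat.card X = n →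
    (∀ H : Subgroup X, IsCoatom H → SSf H.normalCore) → IsSupersoluble X := by
  intro n
  induction n using Nat.strong_induction_on with
  | _ n ih =>
  intro X _ _ hn hX
  by_cases htriv : (⊤ : Subgroup X) = ⊥
  · rw [ss_iff, ← htriv]; exact ssf_top
  have hquot : ∀ R : Subgroup X, R.Normal → R ≠ ⊥ → SSf R := by
    intro R hR hRb
    rw [← ss_quot_iff]
    exact ih _ (hn ▸ card_quot_lt hRb) _ rfl (coatom_quot R fun H hH _ => hX H hH)
  obtain ⟨N, -, hN⟩ := exists_minNormal (⊤ : Subgroup X) inferInstance htriv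
  have hNn := hN.1
  by_contra hns
  have huniq : ∀ R : Subgroup X, R.Normal → R ≠ ⊥ → N ≤ R := by
    intro R hR hRb
    by_contra hle
    have : N ⊓ R = ⊥ := by
      by_contra hne
      exact hle (inf_eq_left.1 (hN.2.2 _ inferInstance inf_le_left hne))
    refine hns (ss_iff.2 ?_)
    rw [← this]
    exact (hquot N hNn hN.2.1).inf (hquot R hR hRb)
  have hfr : N ≤ frattini X := by
    rw [frattini, Order.radical]
    refine le_iInf₂ fun H hH => ?_
    by_contra hle
    have : H.normalCore = ⊥ := by
      by_contra hne
      exact hle ((huniq _ inferInstance hne).trans (Subgroup.normalCore_le _))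
    exact hns (ss_iff.2 (this ▸ hX H hH))
  have hsol : Group.IsSolvable N := by
    haveI : Group.IsNilpotent (frattini X) := frattini_nilpotent
    exact Group.isSolvable_of_isSolvable_injective (Subgroup.inclusion_injective hfr)
  obtain ⟨p, hp, hab, hexp⟩ := minAb hN hsol
  haveI := Fact.mk hp
  have hNp := pgroup_of_exp hexp
  have hs := QuotientGroup.mk'_surjective N
  have hVss : IsSupersoluble (X ⧸ N) := (ss_quot_iff N).2 (hquot N hNn hN.2.1)
  obtain ⟨K, hKn, -, hpK, k, hk⟩ := pcompl hp _ (X ⧸ N) rfl hVss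
  have hKb : K = ⊥ := by
    by_contra hKb
    obtain ⟨q, Q, hq, hQn, hQK, hQ⟩ := exists_prime_normal hVss K hKb
    haveI := Fact.mk hq
    have hqp : q ≠ p := by
      rintro rfl
      exact hpK (hQ ▸ Subgroup.card_dvd_of_le hQK)
    set T : Subgroup X := Q.comap (QuotientGroup.mk' N) with hT
    haveI : T.Normal := inferInstance
    have hidx : N.relIndex T = q ^ 1 := by
      have : N = (⊥ : Subgroup (X ⧸ N)).comap (QuotientGroup.mk' N) := by
        rw [MonoidHom.comap_bot, QuotientGroup.ker_mk']
      nth_rewrite 1 [this]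
      rw [Subgroup.relIndex_comap, hT, Subgroup.map_comap_eq_self_of_surjective hs,
        Subgroup.relIndex_bot_left, hQ, pow_one]
    obtain ⟨P⟩ : Nonempty (Sylow q T) := inferInstance
    have hPn := frat_arg hfr hidx P
    have hPb : (P : Subgroup T).map T.subtype ≠ ⊥ := by
      rw [Ne, Subgroup.map_eq_bot_iff_of_injective _ T.subtype_injective]
      refine P.ne_bot_of_dvd_card ?_
      refine dvd_trans ?_ (Subgroup.index_dvd_card (N.subgroupOf T))
      change q ∣ N.relIndex T
      rw [hidx, pow_one]
    have hle := huniq _ hPn hPb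
    have hd := IsPGroup.disjoint_of_ne q p hqp _ _ (P.2.map T.subtype) hNp
    exact hN.2.1 (hd.eq_bot_of_ge hle)
  have hWp : (⊥ : Subgroup X).relIndex (W p X) = p ^ (k + (Nat.card (N ⊓ W p X : Subgroup X)).factorization p) := by
    obtain ⟨j, hj⟩ := IsPGroup.iff_card.1 (hNp.to_le (inf_le_left : N ⊓ W p X ≤ N))
    rw [Subgroup.relIndex_bot_left, card_map_mul (QuotientGroup.mk' N), W_map p _ hs, hk, hKb,
      QuotientGroup.ker_mk', hj, hp.factorization_pow]
    simp [pow_add]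
  have hc := cent_all hN (W p X) (fixF N hNp hN.2.1 (W p X) ⊥ (by simp) hWp)
  haveI := eig hp hN hab hexp hc
  exact hns (ss_of_cyclic N (hquot N hNn hN.2.1))

theorem pprime_index {p : ℕ} (hp : p.Prime) {X : Type*} [Group X] [Finite X]
    (hss : ∀ Y : Subgroup X, Y ≠ ⊤ → IsSupersoluble Y) (hns : ¬ IsSupersoluble X)
    {N : Subgroup X} (hN : IsMinimalNormal N) (hab : ∀ x ∈ N, ∀ y ∈ N, x * y = y * x)
    (hexp : ∀ x ∈ N, x ^ p = 1) (hNss : SSf N) :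
    ¬ p ∣ (Subgroup.centralizer (N : Set X)).index := by
  haveI := Fact.mk hp
  have hNn := hN.1
  have hNp := pgroup_of_exp hexp
  have hs := QuotientGroup.mk'_surjective N
  set Z := Subgroup.centralizer (N : Set X) with hZ
  have hZmem : ∀ x, x ∈ Z ↔ ∀ d ∈ N, x * d = d * x := by
    intro x
    rw [hZ, Subgroup.mem_centralizer_iff]
    exact ⟨fun h d hd => (h d hd).symm, fun h d hd => (h d hd).symm⟩
  have hNZ : N ≤ Z := fun x hx => (hZmem x).2 fun d hd => hab x hx d hd
  have hVss : IsSupersoluble (X ⧸ N) := (ss_quot_iff N).2 hNss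
  intro hpd
  have hc1 : Nat.card (X ⧸ N) ≠ 1 := by
    intro h
    have h1 : N.index = 1 := h
    rw [Subgroup.index_eq_one] at h1
    rw [h1, top_le_iff] at hNZ
    rw [hNZ, Subgroup.index_top] at hpd
    exact hp.one_lt.ne' (Nat.dvd_one.1 hpd)
  set q := (Nat.card (X ⧸ N)).minFac with hqdef
  have hq : q.Prime := Nat.minFac_prime hc1
  have hmin : ∀ r : ℕ, r.Prime → r ∣ Nat.card (X ⧸ N) → q ≤ r := fun r hr hd =>
    Nat.minFac_le_of_dvd hr.two_le hd
  obtain ⟨K, hKn, -, hqK, k, hk⟩ := pcompl hq _ (X ⧸ N) rfl hVss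
  rw [W_eq_top hq hmin] at hk
  have hidx : K.index = q ^ k := by
    have := Subgroup.card_mul_index K
    rw [← Subgroup.card_top (G := X ⧸ N), hk] at this
    exact Nat.eq_of_mul_eq_mul_left Nat.card_pos this
  set Y : Subgroup X := K.comap (QuotientGroup.mk' N) with hY
  haveI hYn : Y.Normal := inferInstance
  have hNY : N ≤ Y := QuotientGroup.le_comap_mk' N K
  have hYidx : Y.index = q ^ k := by
    rw [hY, Subgroup.index_comap_of_surjective _ hs, hidx]
  have hYtop : Y ≠ ⊤ := by
    intro h
    have h1 : K = ⊤ := by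
      have := congrArg (Subgroup.map (QuotientGroup.mk' N)) h
      rwa [hY, Subgroup.map_comap_eq_self_of_surjective hs,
        Subgroup.map_top_of_surjective _ hs] at this
    rw [h1, Subgroup.card_top] at hqK
    exact hqK (Nat.minFac_dvd _)
  have hNYidx : N.relIndex Y = Nat.card K := by
    have : N = (⊥ : Subgroup (X ⧸ N)).comap (QuotientGroup.mk' N) := by
      rw [MonoidHom.comap_bot, QuotientGroup.ker_mk']
    nth_rewrite 1 [this]
    rw [Subgroup.relIndex_comap, hY, Subgroup.map_comap_eq_self_of_surjective hs,
      Subgroup.relIndex_bot_left]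
  -- the subgroup `W p Y`
  have hYss := hss Y hYtop
  obtain ⟨L, hLn, hLW, hpL, j, hj⟩ := pcompl hp _ Y rfl hYss
  set V : Subgroup X := (W p Y).map Y.subtype with hV
  have hWconj : ∀ g : X, ∀ w : Y, w ∈ W p Y → MulAut.conjNormal g w ∈ W p Y := by
    intro g w hw
    have := W_map p ((MulAut.conjNormal g : Y ≃* Y) : Y →* Y) (MulAut.conjNormal g : Y ≃* Y).surjective
    rw [← this]
    exact ⟨w, hw, rfl⟩
  haveI hVn : V.Normal := by
    refine ⟨?_⟩
    rintro _ ⟨w, hw, rfl⟩ g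
    exact ⟨MulAut.conjNormal g w, hWconj g w hw, MulAut.conjNormal_apply g w⟩
  have hVc : ∀ d ∈ N, ∀ w ∈ V, w * d = d * w := by
    refine cent_all hN V ?_
    have hdisj : Disjoint L (N.subgroupOf Y) := coprime_disjoint hp hpL hNp.comap_subtype
    have hLc : ∀ k ∈ L, ∀ d ∈ N.subgroupOf Y, k * d = d * k := fun k hk d hd =>
      Subgroup.commute_of_normal_of_disjoint L _ hLn inferInstance hdisj k d hk hd
    have hNb : N.subgroupOf Y ≠ ⊥ := by
      rw [Ne, Subgroup.subgroupOf_eq_bot, disjoint_iff, inf_eq_left.2 hNY]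
      exact hN.2.1
    have hrel : L.relIndex (W p Y) = p ^ j := by
      have := Subgroup.relIndex_mul_relIndex ⊥ L (W p Y) bot_le hLW
      rw [Subgroup.relIndex_bot_left, Subgroup.relIndex_bot_left, hj] at this
      exact Nat.eq_of_mul_eq_mul_left Nat.card_pos this
    obtain ⟨d, hd, hd1, hdc⟩ := fixF (N.subgroupOf Y) hNp.comap_subtype hNb (W p Y) L hLc hrel
    refine ⟨d, hd, fun h => hd1 (Subtype.ext h), ?_⟩
    rintro _ ⟨w, hw, rfl⟩
    exact congrArg Subtype.val (hdc w hw)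
  have hWZ : W p Y ≤ Z.subgroupOf Y := by
    intro w hw
    rw [Subgroup.mem_subgroupOf, hZmem]
    exact fun d hd => hVc d hd _ ⟨w, hw, rfl⟩
  have hpr : ∀ r : ℕ, r.Prime → r ∣ Z.relIndex Y → r ∣ p - 1 := fun r hr hd =>
    dvd_of_dvd_index_W hr (hd.trans (Subgroup.index_dvd_of_le hWZ))
  have hZY : Z.index ∣ Z.relIndex Y * q ^ k := by
    rw [← hYidx, ← Subgroup.inf_relIndex_right,
      Subgroup.relIndex_mul_index (inf_le_right : Z ⊓ Y ≤ Y)]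
    exact Subgroup.index_dvd_of_le inf_le_left
  by_cases hqp : q = p
  · rw [hqp] at hmin hZY
    have hrel1 : Z.relIndex Y = 1 := by
      by_contra hne
      obtain ⟨r, hr, hrd⟩ := Nat.exists_prime_and_dvd hne
      have h1 := Nat.le_of_dvd (by have := hp.two_le; omega) (hpr r hr hrd)
      have h2 : r ∣ Nat.card K := by
        rw [← hNYidx]
        exact hrd.trans (Subgroup.relIndex_dvd_of_le_left Y hNZ)
      have h3 := hmin r hr (h2.trans (Subgroup.card_subgroup_dvd_card K))
      have := hp.two_le
      omega
    rw [hrel1, one_mul] at hZY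
    obtain ⟨m, -, hm⟩ := (Nat.dvd_prime_pow hp).1 hZY
    obtain ⟨d, hd, hd1, hdc⟩ := fixF N hNp hN.2.1 ⊤ Z (fun z hz d hd => (hZmem z).1 hz d hd)
      (j := m) (by rw [Subgroup.relIndex_top_right, hm])
    haveI := minNormal_cyc hN hd hd1 (fun g => by
      rw [hdc g trivial, mul_inv_cancel_right]; exact Subgroup.mem_zpowers d)
    exact hns (ss_of_cyclic N hNss)
  · rcases (Nat.Prime.dvd_mul hp).1 (hpd.trans hZY) with h | h
    · have h1 := Nat.le_of_dvd (by have := hp.two_le; omega) (hpr p hp h)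
      have := hp.two_le
      omega
    · exact hqp ((Nat.prime_dvd_prime_iff_eq hp hq).1 (hp.dvd_of_dvd_pow h)).symm


theorem resid {G : Type*} [Group G] [Finite G] : (ssResidual G).Normal ∧ SSf (ssResidual G) ∧
    ∀ N : Subgroup G, N.Normal → SSf N → ssResidual G ≤ N := by
  obtain ⟨N, -, hN⟩ := Set.Finite.exists_le_minimal
    (s := {N : Subgroup G | N.Normal ∧ SSf N}) (Set.toFinite _)
    (a := ⊤) ⟨inferInstance, ssf_top⟩
  have hNn : N.Normal := hN.1.1
  have hle : ∀ M : Subgroup G, M.Normal → SSf M → N ≤ M := by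
    intro M hM hMs
    exact (hN.2 (show (N ⊓ M) ∈ _ from ⟨inferInstance, hN.1.2.inf hMs⟩) inf_le_left).trans
      inf_le_right
  have hle2 : ∀ M : Subgroup G, M.Normal → SSf M → ssResidual G ≤ M := by
    intro M hM hMs
    exact iInf₂_le M ⟨hM, (ss_quot_iff M).2 hMs⟩
  have : ssResidual G = N := by
    refine le_antisymm (hle2 N hNn hN.1.2) (le_iInf₂ ?_)
    rintro M ⟨hM, hMs⟩
    exact hle M hM ((ss_quot_iff M).1 hMs)
  exact ⟨this ▸ hNn, this ▸ hN.1.2, hle2⟩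

theorem max_iff {G : Type*} [Group G] {H M : Subgroup G} :
    IsMaximalIn H M ↔ H < M ∧ ∀ L, H ≤ L → L ≤ M → L = H ∨ L = M := by
  constructor
  · rintro ⟨hle, hne, hco⟩
    refine ⟨lt_of_le_of_ne hle ?_, fun L hHL hLM => ?_⟩
    · rintro rfl
      exact hne (Subgroup.subgroupOf_self _)
    · by_cases h : L = H
      · exact Or.inl h
      · right
        have hlt : H.subgroupOf M < L.subgroupOf M := by
          refine lt_of_le_of_ne (Subgroup.comap_mono hHL) fun h' => h ?_
          rw [Subgroup.subgroupOf_inj, inf_eq_left.2 hle, inf_eq_left.2 hLM] at h'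
          exact h'.symm
        exact le_antisymm hLM (Subgroup.subgroupOf_eq_top.1 (hco _ hlt))
  · rintro ⟨hlt, h⟩
    refine ⟨hlt.le, fun h' => not_le_of_gt hlt (Subgroup.subgroupOf_eq_top.1 h'), fun L hL => ?_⟩
    have h1 : H ≤ L.map M.subtype := by
      intro x hx
      exact ⟨⟨x, hlt.le hx⟩, hL.le hx, rfl⟩
    rcases h _ h1 (Subgroup.map_subtype_le L) with h2 | h2
    · exfalso
      refine hL.ne ?_
      rw [← h2, Subgroup.subgroupOf, Subgroup.comap_map_eq_self_of_injective M.subtype_injective]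
    · have := congrArg (Subgroup.comap M.subtype) h2
      rw [Subgroup.comap_map_eq_self_of_injective M.subtype_injective] at this
      rw [this]
      exact Subgroup.subgroupOf_self M

theorem max_top_iff {G : Type*} [Group G] {M : Subgroup G} : IsMaximalIn M ⊤ ↔ IsCoatom M := by
  rw [max_iff]
  constructor
  · rintro ⟨h1, h2⟩
    refine ⟨h1.ne, fun L hL => (h2 L hL.le le_top).resolve_left hL.ne'⟩
  · intro h
    refine ⟨h.lt_top, fun L hL _ => ?_⟩
    rcases hL.lt_or_eq with h' | h'
    · exact Or.inr (h.2 L h')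
    · exact Or.inl h'.symm

theorem nmax_iff {G : Type*} [Group G] {H : Subgroup G} : IsNMaximal 2 H ↔
    ∃ M : Subgroup G, IsCoatom M ∧ IsMaximalIn H M := by
  constructor
  · rintro ⟨M, ⟨_, rfl, hM⟩, hH⟩
    exact ⟨M, max_top_iff.1 hM, hH⟩
  · rintro ⟨M, hM, hH⟩
    exact ⟨M, ⟨⊤, rfl, max_top_iff.2 hM⟩, hH⟩

theorem step_top {G : Type*} [Group G] {D H : Subgroup G} [hDn : D.Normal] (hD : SSf D)
    (h : D ≤ H) :
    IsSupersoluble (↥(⊤ : Subgroup G) ⧸ (H.subgroupOf ⊤).normalCore) := by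
  rw [ss_quot_iff]
  have h1 := hD.comap (⊤ : Subgroup G).subtype
  haveI : (D.comap (⊤ : Subgroup G).subtype).Normal := inferInstance
  exact h1.mono (Subgroup.normal_le_normalCore.2 (Subgroup.comap_mono h))

theorem step_ss {G : Type*} [Group G] (N : Subgroup G) [N.Normal] (h : IsSupersoluble G) :
    IsSupersoluble (G ⧸ N) := ss_of_surj h _ (QuotientGroup.mk'_surjective N)

theorem usub_two {G : Type*} [Group G] {D H K : Subgroup G} [D.Normal] (hD : SSf D)
    (hHK : H ≤ K) (hK : IsSupersoluble K) (hDK : D ≤ K) : IsUSubnormal H := by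
  refine ⟨2, ![H, K, ⊤], rfl, rfl, fun i => ?_⟩
  match i with
  | 0 => exact ⟨hHK, step_ss _ hK⟩
  | 1 => exact ⟨le_top, step_top hD hDK⟩

theorem backward {G : Type*} [Group G] [Finite G] (h : IsSupersoluble G ∨ IsSDH G) :
    ∀ H : Subgroup G, IsNMaximal 2 H → IsUSubnormal H := by
  intro H hH
  obtain ⟨hDn, hDs, hDmin⟩ := resid (G := G)
  rcases h with h | ⟨⟨hns, hss⟩, hmin⟩
  · haveI : IsSupersoluble (⊤ : Subgroup G) :=
      ss_of_inj h (⊤ : Subgroup G).subtype (Subgroup.subtype_injective _)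
    exact usub_two (ssf_top (G := G)) le_top this le_rfl
  obtain ⟨M, hM, hHM⟩ := nmax_iff.1 hH
  rw [max_iff] at hHM
  set D := ssResidual G with hD
  by_cases hDM : D ≤ M
  · exact usub_two hDs hHM.1.le (hss M hM.1) hDM
  have hMD : M ⊔ D = ⊤ := by
    refine hM.2 _ (lt_of_le_of_ne le_sup_left fun h => hDM ?_)
    rw [h]; exact le_sup_right
  have hDt : D ≠ ⊤ := by
    intro hDt
    refine hns (not_simple hss fun N hN => ?_)
    by_cases hNb : N = ⊥
    · exact Or.inl hNb
    · right
      rw [← hDt]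
      exact hmin.2.2 N hN (hDt ▸ le_top) hNb
  obtain ⟨p, hp, hab, -⟩ := minAb hmin (ss_solvable _ D rfl (hss D hDt))
  have hMDb : M ⊓ D = ⊥ := by
    have hn : (M ⊓ D).Normal := by
      rw [← Subgroup.normalizer_eq_top_iff, eq_top_iff, ← hMD]
      refine sup_le ?_ ?_
      · intro m hm
        rw [Subgroup.mem_normalizer_iff]
        intro x
        constructor
        · rintro ⟨h1, h2⟩
          exact ⟨M.mul_mem (M.mul_mem hm h1) (M.inv_mem hm), hDn.conj_mem x h2 m⟩
        · rintro ⟨h1, h2⟩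
          have e : x = m⁻¹ * (m * x * m⁻¹) * m⁻¹⁻¹ := by group
          rw [e]
          exact ⟨M.mul_mem (M.mul_mem (M.inv_mem hm) h1) (by simpa using hm), hDn.conj_mem _ h2 m⁻¹⟩
      · intro d hd
        rw [Subgroup.mem_normalizer_iff]
        intro x
        constructor
        · intro hx
          rw [hab d hd x hx.2, mul_inv_cancel_right]; exact hx
        · intro hx
          have e : x = d⁻¹ * (d * x * d⁻¹) * d := by group
          rw [e, hab _ (inv_mem hd) _ hx.2, inv_mul_cancel_right]
          exact hx
    by_contra hne
    exact hDM (inf_eq_right.1 (hmin.2.2 _ hn inf_le_right hne))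
  refine usub_two hDs (le_sup_left : H ≤ H ⊔ D) (hss _ fun h => ?_) le_sup_right
  refine not_le_of_gt hHM.1 fun m hm => ?_
  have : m ∈ H ⊔ D := by rw [h]; trivial
  obtain ⟨x, hx, d, hd, rfl⟩ := Subgroup.mem_sup_of_normal_right.1 this
  have hdM : d ∈ M ⊓ D := by
    refine ⟨?_, hd⟩
    have := mul_mem (inv_mem (hHM.1.le hx)) hm
    rwa [inv_mul_cancel_left] at this
  rw [hMDb, Subgroup.mem_bot] at hdM
  rw [hdM, mul_one]
  exact hx

theorem chain_a {G : Type*} [Group G] {H M : Subgroup G} (hHM : IsMaximalIn H M)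
    (hU : IsUSubnormal H) : SSf (H.subgroupOf M).normalCore := by
  rw [max_iff] at hHM
  obtain ⟨n, c, h0, hn, hc⟩ := hU
  have key : ∀ i, (c i ⊓ M = H) ∨ SSf (H.subgroupOf M).normalCore := by
    intro i
    induction i using Fin.induction with
    | zero => left; rw [h0]; exact inf_eq_left.2 hHM.1.le
    | succ i ih =>
      rcases ih with ih | ih
      · rcases hHM.2 (c i.succ ⊓ M) (by rw [← ih]; exact inf_le_inf_right _ (hc i).1)
          inf_le_right with h | h
        · exact Or.inl h
        · right
          have hle : M ≤ c i.succ := inf_eq_right.1 h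
          have h1 := ((ss_quot_iff _).1 (hc i).2).comap (Subgroup.inclusion hle)
          refine h1.mono (Subgroup.normal_le_normalCore.2 fun m hm => ?_)
          rw [Subgroup.mem_subgroupOf, ← ih]
          refine ⟨?_, m.2⟩
          have := Subgroup.normalCore_le _ (Subgroup.mem_comap.1 hm)
          exact this
      · exact Or.inr ih
  rcases key (Fin.last n) with h | h
  · rw [hn, top_inf_eq] at h
    exact absurd h hHM.1.ne'
  · exact h

theorem chain_b {G : Type*} [Group G] [Finite G] {H : Subgroup G} (hH : H ≠ ⊤)
    (hU : IsUSubnormal H) : H ⊔ ssResidual G ≠ ⊤ := by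
  obtain ⟨hDn, hDs, hDmin⟩ := resid (G := G)
  obtain ⟨n, c, h0, hn, hc⟩ := hU
  have key : ∀ i, H ≤ c i ∧ (c i ≠ ⊤ ∨ H ⊔ ssResidual G ≠ ⊤) := by
    intro i
    induction i using Fin.induction with
    | zero => rw [h0]; exact ⟨le_rfl, Or.inl hH⟩
    | succ i ih =>
      refine ⟨ih.1.trans (hc i).1, ?_⟩
      rcases ih.2 with h | h
      · by_cases ht : c i.succ = ⊤
        · right
          have h1 := (hc i).2
          rw [ss_quot_iff, ht] at h1
          have hs : Function.Surjective (⊤ : Subgroup G).subtype := fun x => ⟨⟨x, trivial⟩, rfl⟩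
          have h2 := h1.map _ hs
          have hnn : (((c i.castSucc).subgroupOf ⊤).normalCore.map
            (⊤ : Subgroup G).subtype).Normal := (Subgroup.normalCore_normal _).map _ hs
          have h3 : ssResidual G ≤ c i.castSucc := (hDmin _ hnn h2).trans (by
            rw [Subgroup.map_le_iff_le_comap]
            exact Subgroup.normalCore_le _)
          intro h4
          exact h (top_le_iff.1 (h4 ▸ sup_le ih.1 h3))
        · exact Or.inl ht
      · exact Or.inr h
  exact (key (Fin.last n)).2.resolve_left (by rw [hn]; simp)


theorem le_of_not_dvd_index {p : ℕ} (hp : p.Prime) {G : Type*} [Group G] [Finite G]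
    {S F : Subgroup G} [F.Normal] (hS : IsPGroup p S) (hF : ¬ p ∣ F.index) : S ≤ F := by
  intro x hx
  obtain ⟨k, hk⟩ := hS ⟨x, hx⟩
  have h1 : x ^ p ^ k = 1 := by
    have := congrArg Subtype.val hk
    simpa only [Subgroup.coe_pow, Subgroup.coe_one] using this
  have h2 : (x : G ⧸ F) ^ p ^ k = 1 := by
    rw [← QuotientGroup.mk_pow, h1, QuotientGroup.mk_one]
  have h3 : (x : G ⧸ F) ^ Nat.card (G ⧸ F) = 1 := pow_card_eq_one'
  have h4 := pow_gcd_eq_one.2 ⟨h3, h2⟩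
  have h5 : Nat.gcd (Nat.card (G ⧸ F)) (p ^ k) = 1 :=
    Nat.Coprime.pow_right k ((Nat.Prime.coprime_iff_not_dvd hp).2 hF).symm
  rw [h5, pow_one] at h4
  exact (QuotientGroup.eq_one_iff x).1 h4

theorem not_dvd_card_of_frattini {p : ℕ} (hp : p.Prime) {M : Type*} [Group M] [Finite M]
    {F : Subgroup M} [F.Normal] (hF : F ≤ frattini M) (hidx : ¬ p ∣ F.index) :
    ¬ p ∣ Nat.card M := by
  haveI := Fact.mk hp
  obtain ⟨S⟩ : Nonempty (Sylow p M) := inferInstance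
  have hSF : (S : Subgroup M) ≤ F := le_of_not_dvd_index hp S.2 hidx
  have hSn : (S : Subgroup M).Normal := by
    have := frat_arg (q := p) (T := F) hF (k := 0) (by rw [Subgroup.relIndex_self, pow_zero])
      (S.subtype hSF)
    rw [Sylow.coe_subtype, Subgroup.subgroupOf_map_subtype, inf_eq_left.2 hSF] at this
    exact this
  obtain ⟨K, hK⟩ := Subgroup.exists_right_complement'_of_coprime
    (N := (S : Subgroup M)) S.card_coprime_index
  have hKt : K = ⊤ := by
    apply frattini_nongenerating
    rw [eq_top_iff, ← hK.sup_eq_top, sup_comm]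
    exact sup_le_sup_left (hSF.trans hF) _
  have hSb : (S : Subgroup M) = ⊥ := by
    have := hK.disjoint
    rw [hKt, disjoint_top] at this
    exact this
  intro hd
  exact S.ne_bot_of_dvd_card hd hSb

theorem core5 {G : Type*} [Group G] [Finite G]
    (hss : ∀ Y : Subgroup G, Y ≠ ⊤ → IsSupersoluble Y) (hns : ¬ IsSupersoluble G)
    {D : Subgroup G} (hDn : D.Normal) (hDs : SSf D)
    (hDmin : ∀ N : Subgroup G, N.Normal → SSf N → D ≤ N)
    (hb : ∀ M : Subgroup G, IsCoatom M → ∀ L < M, L ⊔ D ≠ ⊤)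
    (hDt : D ≠ ⊤)
    {E : Subgroup G} (hEn : E.Normal) (hED : E < D)
    (hE : ∀ R : Subgroup G, R.Normal → E ≤ R → R ≤ D → R = E ∨ R = D) : E = ⊥ := by
  have hEs : ¬ SSf E := fun h => not_le_of_gt hED (hDmin E hEn h)
  have hXns : ¬ IsSupersoluble (G ⧸ E) := fun h => hEs ((ss_quot_iff E).1 h)
  have hs := QuotientGroup.mk'_surjective E
  set π := QuotientGroup.mk' E with hπ
  have hker : π.ker = E := QuotientGroup.ker_mk' E
  have hπE : ∀ x, π x = 1 ↔ x ∈ E := fun x => by rw [← MonoidHom.mem_ker, hker]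
  obtain ⟨M, hM, hEM, hMs⟩ : ∃ M : Subgroup G, IsCoatom M ∧ E ≤ M ∧ ¬ SSf M.normalCore := by
    by_contra hcon
    push Not at hcon
    exact hXns (Hup _ _ rfl (coatom_quot E hcon))
  have hDM : ¬ D ≤ M := fun h => hMs (hDs.mono (Subgroup.normal_le_normalCore.2 h))
  have hsupM : ∀ R : Subgroup G, ¬ R ≤ M → M ⊔ R = ⊤ := by
    intro R hR
    refine hM.2 _ (lt_of_le_of_ne le_sup_left fun h => hR ?_)
    rw [h]; exact le_sup_right
  have hMD := hsupM D hDM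
  set N : Subgroup (G ⧸ E) := D.map π with hNdef
  have hcomapN : N.comap π = D := by
    rw [hNdef, Subgroup.comap_map_eq, hker, sup_eq_left.2 hED.le]
  have hN : IsMinimalNormal N := by
    refine ⟨hDn.map π hs, ?_, ?_⟩
    · intro h
      rw [hNdef, Subgroup.map_eq_bot_iff, hker] at h
      exact not_le_of_gt hED h
    · intro R hR hRN hRb
      rcases hE (R.comap π) inferInstance (QuotientGroup.le_comap_mk' E R)
        (hcomapN ▸ Subgroup.comap_mono hRN) with h | h
      · exfalso
        apply hRb
        rw [← Subgroup.map_comap_eq_self_of_surjective hs R, h, Subgroup.map_eq_bot_iff, hker]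
      · rw [← Subgroup.map_comap_eq_self_of_surjective hs R, h]
  have hNn := hN.1
  have hNs : SSf N := hDs.map π hs
  haveI hDsol : Group.IsSolvable D := ss_solvable _ D rfl (hss D hDt)
  have hNsol : Group.IsSolvable N :=
    Group.isSolvable_of_surjective (π.subgroupMap_surjective D)
  obtain ⟨p, hp, hab, hexp⟩ := minAb hN hNsol
  haveI := Fact.mk hp
  have hNp := pgroup_of_exp hexp
  -- `M ⊓ D = E`
  have hMDE : M ⊓ D = E := by
    have hn : (M ⊓ D).Normal := by
      refine ⟨fun x hx g => ?_⟩
      have hg : g ∈ M ⊔ D := by rw [hMD]; trivial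
      obtain ⟨m, hm, d, hd, rfl⟩ := Subgroup.mem_sup_of_normal_right.1 hg
      have h1 : d * x * d⁻¹ * x⁻¹ ∈ E := by
        rw [← hπE]
        have := hab (π d) (Subgroup.mem_map_of_mem π hd) (π x) (Subgroup.mem_map_of_mem π hx.2)
        rw [map_mul, map_mul, map_mul, this, map_inv, map_inv]
        group
      have h2 : d * x * d⁻¹ ∈ M := by
        have := M.mul_mem (hEM h1) hx.1
        rwa [inv_mul_cancel_right] at this
      refine ⟨?_, hDn.conj_mem _ hx.2 _⟩
      have e : m * d * x * (m * d)⁻¹ = m * (d * x * d⁻¹) * m⁻¹ := by group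
      rw [e]
      exact M.mul_mem (M.mul_mem hm h2) (M.inv_mem hm)
    refine (hE _ hn (le_inf hEM hED.le) inf_le_right).resolve_right fun h => hDM ?_
    exact inf_eq_right.1 h
  -- `E` lies in the Frattini subgroup
  have hEfr : E ≤ frattini G := by
    rw [frattini, Order.radical]
    refine le_iInf₂ fun T hT => ?_
    by_contra hET
    have hT : IsCoatom T := hT
    have hMT : ¬ M ≤ T := by
      intro h
      rcases h.lt_or_eq with h | h
      · exact hT.1 (hM.2 T h)
      · exact hET (h ▸ hEM)
    have hTE : T ⊔ E = ⊤ := by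
      refine hT.2 _ (lt_of_le_of_ne le_sup_left fun h => hET ?_)
      rw [h]; exact le_sup_right
    refine hb M hM (M ⊓ T) (lt_of_le_of_ne inf_le_left fun h => hMT (inf_eq_left.1 h)) ?_
    rw [eq_top_iff, ← hMD]
    refine sup_le (fun m hm => ?_) le_sup_right
    have hm' : m ∈ T ⊔ E := by rw [hTE]; trivial
    obtain ⟨t, ht, e, he, rfl⟩ := Subgroup.mem_sup_of_normal_right.1 hm'
    refine mul_mem (Subgroup.mem_sup_left ⟨?_, ht⟩) (Subgroup.mem_sup_right (hED.le he))
    have := M.mul_mem hm (M.inv_mem (hEM he))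
    rwa [mul_inv_cancel_right] at this
  -- the centraliser
  have hXss : ∀ Y : Subgroup (G ⧸ E), Y ≠ ⊤ → IsSupersoluble Y := by
    intro Y hY
    refine ss_of_surj (hss (Y.comap π) fun h => hY ?_) (π.subgroupComap Y)
      (π.subgroupComap_surjective_of_surjective Y hs)
    rw [← Subgroup.map_comap_eq_self_of_surjective hs Y, h, Subgroup.map_top_of_surjective _ hs]
  have hZidx := pprime_index hp hXss hXns hN hab hexp hNs
  set Z := Subgroup.centralizer (N : Set (G ⧸ E)) with hZ
  haveI hZn : Z.Normal := inferInstance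
  set Zc := Z.comap π with hZc
  haveI hZcn : Zc.Normal := inferInstance
  have hZcidx : Zc.index = Z.index := Subgroup.index_comap_of_surjective _ hs
  have step1 : ∀ L < M, ¬ M ≤ L ⊔ (Zc ⊓ M) := by
    intro L hL hML
    set A : Subgroup (G ⧸ E) := (L ⊔ D).map π with hA
    have hAss : IsSupersoluble A :=
      ss_of_surj (hss _ (hb M hM L hL)) (π.subgroupMap (L ⊔ D)) (π.subgroupMap_surjective _)
    have hNA : N ≤ A := Subgroup.map_mono le_sup_right
    have hNb : N.subgroupOf A ≠ ⊥ := by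
      rw [Ne, Subgroup.subgroupOf_eq_bot, disjoint_iff, inf_eq_left.2 hNA]
      exact hN.2.1
    obtain ⟨q, Q, hq, hQn, hQN, hQ⟩ := exists_prime_normal hAss (N.subgroupOf A) hNb
    set Q' := Q.map A.subtype with hQ'
    have hQ'N : Q' ≤ N := by
      rw [hQ', Subgroup.map_le_iff_le_comap]; exact hQN
    have hcardQ : Nat.card Q' = q := by
      rw [hQ', Subgroup.card_map_of_injective A.subtype_injective, hQ]
    have htop : A ⊔ Z = ⊤ := by
      rw [eq_top_iff, ← Subgroup.map_top_of_surjective π hs, ← hMD, Subgroup.map_sup]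
      refine sup_le ?_ (hNA.trans le_sup_left)
      refine (Subgroup.map_mono hML).trans ?_
      rw [Subgroup.map_sup]
      refine sup_le ((Subgroup.map_mono le_sup_left).trans le_sup_left) ?_
      refine le_trans ?_ le_sup_right
      rw [Subgroup.map_le_iff_le_comap]
      exact inf_le_left
    have hQ'n : Q'.Normal := by
      refine ⟨fun x hx g => ?_⟩
      have hg : g ∈ A ⊔ Z := by rw [htop]; trivial
      obtain ⟨a, ha, z, hz, rfl⟩ := Subgroup.mem_sup_of_normal_right.1 hg
      have h1 : z * x = x * z := ((Subgroup.mem_centralizer_iff.1 hz) x (hQ'N hx)).symm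
      have e : a * z * x * (a * z)⁻¹ = a * x * a⁻¹ := by
        rw [mul_assoc a z x, h1]; group
      rw [e]
      obtain ⟨y, hy, rfl⟩ := hx
      exact ⟨⟨a, ha⟩ * y * ⟨a, ha⟩⁻¹, hQn.conj_mem y hy _, rfl⟩
    have hQ'b : Q' ≠ ⊥ := by
      intro h
      rw [h, Subgroup.card_bot] at hcardQ
      exact hq.one_lt.ne hcardQ
    have hQN' := hN.2.2 Q' hQ'n hQ'N hQ'b
    rw [hQN'] at hcardQ
    haveI := prime_cyc hq hcardQ
    exact hXns (ss_of_cyclic N hNs)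
  -- `p` does not divide `|M|`
  have hpM : ¬ p ∣ Nat.card M := by
    refine not_dvd_card_of_frattini hp (F := Zc.subgroupOf M) ?_ ?_
    · rw [frattini, Order.radical]
      refine le_iInf₂ fun L' hL' => ?_
      by_contra hle
      have hL' : IsCoatom L' := hL'
      have hsup : L' ⊔ Zc.subgroupOf M = ⊤ := by
        refine hL'.2 _ (lt_of_le_of_ne le_sup_left fun h => hle ?_)
        rw [h]; exact le_sup_right
      have h2 := congrArg (Subgroup.map M.subtype) hsup
      rw [Subgroup.map_sup, Subgroup.subgroupOf_map_subtype, ← MonoidHom.range_eq_map,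
        Subgroup.range_subtype] at h2
      refine step1 (L'.map M.subtype) (lt_of_le_of_ne (Subgroup.map_subtype_le _) fun h => ?_) h2.ge
      apply hL'.1
      apply Subgroup.map_injective M.subtype_injective
      rw [h, ← MonoidHom.range_eq_map, Subgroup.range_subtype]
    · intro h
      apply hZidx
      rw [← hZcidx]
      exact h.trans (Subgroup.relIndex_dvd_index_of_normal Zc M)
  have hpE : ¬ p ∣ Nat.card E := fun h => hpM (h.trans (Subgroup.card_dvd_of_le hEM))
  -- Sylow subgroup of `D`
  obtain ⟨m, hm⟩ := IsPGroup.iff_card.1 hNp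
  have hidx : E.relIndex D = p ^ m := by
    rw [← hm, hNdef]
    have : E = (⊥ : Subgroup (G ⧸ E)).comap π := by rw [MonoidHom.comap_bot, hker]
    nth_rewrite 1 [this]
    rw [Subgroup.relIndex_comap, Subgroup.relIndex_bot_left]
  obtain ⟨P⟩ : Nonempty (Sylow p D) := inferInstance
  have hPn := frat_arg hEfr hidx P
  set P' := (P : Subgroup D).map D.subtype with hP'
  have hPp : IsPGroup p P' := P.2.map D.subtype
  have hdisj : Disjoint E P' := coprime_disjoint hp hpE hPp
  have hPD : P' ≤ D := Subgroup.map_subtype_le _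
  have hPM : ¬ P' ≤ M := by
    intro h
    have h1 : P' ≤ E := hMDE ▸ le_inf h hPD
    have h2 : P' = ⊥ := hdisj.symm.eq_bot_of_le h1
    rw [hP', Subgroup.map_eq_bot_iff_of_injective _ D.subtype_injective] at h2
    have hm0 : m ≠ 0 := by
      rintro rfl
      rw [pow_zero, Subgroup.relIndex_eq_one] at hidx
      exact not_le_of_gt hED hidx
    have h3 : p ∣ Nat.card D :=
      (hidx ▸ dvd_pow_self p hm0 : p ∣ E.relIndex D).trans
        (Subgroup.index_dvd_card (E.subgroupOf D))
    exact P.ne_bot_of_dvd_card h3 h2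
  have hMP := hsupM P' hPM
  have hPs : SSf P' := by
    rw [← ss_quot_iff]
    refine ss_of_surj (hss M hM.1) ((QuotientGroup.mk' P').comp M.subtype) fun y => ?_
    obtain ⟨g, rfl⟩ := QuotientGroup.mk'_surjective P' y
    have hg : g ∈ M ⊔ P' := by rw [hMP]; trivial
    obtain ⟨a, ha, x, hx, rfl⟩ := Subgroup.mem_sup_of_normal_right.1 hg
    refine ⟨⟨a, ha⟩, ?_⟩
    have : QuotientGroup.mk' P' x = 1 := (QuotientGroup.eq_one_iff x).2 hx
    rw [map_mul, this, mul_one]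
    rfl
  exact hdisj.eq_bot_of_le (hED.le.trans (hDmin P' hPn hPs))

theorem forward {G : Type*} [Group G] [Finite G]
    (h : ∀ H : Subgroup G, IsNMaximal 2 H → IsUSubnormal H) : IsSupersoluble G ∨ IsSDH G := by
  by_cases hns : IsSupersoluble G
  · exact Or.inl hns
  right
  obtain ⟨hDn, hDs, hDmin⟩ := resid (G := G)
  have hmaps : ∀ M H' : Subgroup G, ∀ K : Subgroup M, IsCoatom K → H' = K.map M.subtype →
      IsMaximalIn H' M ∧ H'.subgroupOf M = K := by
    rintro M _ K hK rfl
    have e : (K.map M.subtype).subgroupOf M = K := by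
      rw [Subgroup.subgroupOf, Subgroup.comap_map_eq_self_of_injective M.subtype_injective]
    exact ⟨⟨Subgroup.map_subtype_le _, e.symm ▸ hK⟩, e⟩
  have hMss : ∀ M : Subgroup G, IsCoatom M → IsSupersoluble M := by
    intro M hM
    refine Hup _ _ rfl fun K hK => ?_
    obtain ⟨h1, h2⟩ := hmaps M _ K hK rfl
    have := chain_a h1 (h _ (nmax_iff.2 ⟨M, hM, h1⟩))
    rwa [h2] at this
  have hss : ∀ Y : Subgroup G, Y ≠ ⊤ → IsSupersoluble Y := by
    intro Y hY
    obtain ⟨M, hM, hYM⟩ := (eq_top_or_exists_le_coatom Y).resolve_left hY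
    exact ss_of_inj (hMss M hM) _ (Subgroup.inclusion_injective hYM)
  have hb : ∀ M : Subgroup G, IsCoatom M → ∀ L < M, L ⊔ ssResidual G ≠ ⊤ := by
    intro M hM L hL htop
    have hLt : L.subgroupOf M ≠ ⊤ := fun h => not_le_of_gt hL (Subgroup.subgroupOf_eq_top.1 h)
    obtain ⟨K, hK, hLK⟩ := (eq_top_or_exists_le_coatom _).resolve_left hLt
    obtain ⟨h1, h2⟩ := hmaps M _ K hK rfl
    have hLH : L ≤ K.map M.subtype := fun x hx => ⟨⟨x, hL.le hx⟩, hLK hx, rfl⟩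
    have hne : K.map M.subtype ≠ ⊤ := fun h =>
      hM.1 (top_le_iff.1 (h ▸ Subgroup.map_subtype_le K))
    refine chain_b hne (h _ (nmax_iff.2 ⟨M, hM, h1⟩)) ?_
    rw [eq_top_iff, ← htop]
    exact sup_le_sup_right hLH _
  have hDb : ssResidual G ≠ ⊥ := by
    intro h
    rw [h] at hDs
    exact hns (ss_iff.2 hDs)
  have hDt : ssResidual G ≠ ⊤ := by
    intro hDt
    have hbt : (⊥ : Subgroup G) ≠ ⊤ := by
      intro h
      exact hDb (by rw [hDt, h])
    obtain ⟨M, hM, -⟩ := (eq_top_or_exists_le_coatom (⊥ : Subgroup G)).resolve_left hbt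
    have hMb : M = ⊥ := by
      by_contra hne
      exact hb M hM ⊥ (bot_lt_iff_ne_bot.2 hne) (by rw [hDt, sup_top_eq])
    haveI : Nontrivial G := by
      rw [← Subgroup.nontrivial_iff]; exact ⟨⊥, ⊤, hbt⟩
    obtain ⟨x, hx⟩ := exists_ne (1 : G)
    have ht : Subgroup.zpowers x = ⊤ := by
      refine hM.2 _ ?_
      rw [hMb, bot_lt_iff_ne_bot, Ne, Subgroup.zpowers_eq_bot]
      exact hx
    haveI : IsCyclic G := ⟨⟨x, fun y => by
      have : y ∈ (⊤ : Subgroup G) := trivial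
      rwa [← ht] at this⟩⟩
    exact hns ss_of_isCyclic
  refine ⟨⟨hns, hss⟩, hDn, hDb, fun R hR hRD hRb => ?_⟩
  by_contra hne
  obtain ⟨E, hRE, hE⟩ := Set.Finite.exists_le_maximal
    (s := {N : Subgroup G | N.Normal ∧ N < ssResidual G}) (Set.toFinite _)
    (a := R) ⟨hR, lt_of_le_of_ne hRD hne⟩
  have hEb := core5 hss hns hDn hDs hDmin hb hDt hE.1.1 hE.1.2 (fun S hS hES hSD => by
    rcases hSD.lt_or_eq with h' | h'
    · exact Or.inl (le_antisymm (hE.2 (show S ∈ _ from ⟨hS, h'⟩) hES) hES)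
    · exact Or.inr h')
  exact hRb (le_bot_iff.1 (hEb ▸ hRE))


end SSH

/-- Every `2`-maximal subgroup of `G` is `𝔘`-subnormal in `G` if and only if
`G` is either supersoluble or an `SDH`-group. -/
theorem every_2maximal_Usubnormal_iff (G : Type*) [Group G] [Finite G] :
    (∀ H : Subgroup G, IsNMaximal 2 H → IsUSubnormal H) ↔
      IsSupersoluble G ∨ IsSDH G := by
  exact ⟨SSH.forward, SSH.backward⟩
end

section
/- If every n-maximal subgroup of a finite group G is K-𝔘-subnormal in G, then every (n−1)-maximal subgroup of G is supersoluble. -/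
open Subgroup

theorem hs_cyc_pull {G H : Type*} [Group G] [Group H] (A B : Subgroup G)
    [hn : (A.subgroupOf B).Normal] (hc : IsCyclic (↥B ⧸ A.subgroupOf B)) (φ : H →* G)
    (K : Subgroup H) (hK : ∀ y ∈ K, φ y ∈ B) :
    ∃ x ∈ K, ∀ y ∈ K, ∃ k : ℤ, φ (x ^ k)⁻¹ * φ y ∈ A := by
  let ψ : K →* B := (φ.comp K.subtype).codRestrict B (fun y => hK y y.2)
  let χ : K →* (↥B ⧸ A.subgroupOf B) := (QuotientGroup.mk' _).comp ψ
  have hr : IsCyclic χ.range := inferInstance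
  obtain ⟨⟨_, x, rfl⟩, hx⟩ := hr.exists_generator
  refine ⟨x, x.2, fun y hy => ?_⟩
  obtain ⟨k, hk⟩ := hx ⟨χ ⟨y, hy⟩, ⟨⟨y, hy⟩, rfl⟩⟩
  refine ⟨k, ?_⟩
  have hk' : χ (x ^ k) = χ ⟨y, hy⟩ := by
    rw [map_zpow]; exact congrArg Subtype.val hk
  have := QuotientGroup.eq.mp hk'
  rw [Subgroup.mem_subgroupOf] at this
  rw [map_inv]
  exact this

theorem hs_L1 {G H : Type*} [Group G] [Group H] (hG : IsSupersoluble G) (φ : H →* G)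
    (K N : Subgroup H) [hKn : K.Normal] [hN : N.Normal] (hKN : ¬ K ≤ N) (hker : K ⊓ φ.ker ≤ N) :
    ∃ x ∈ K, x ∉ N ∧ (N ⊔ zpowers x).Normal := by
  obtain ⟨n, c, hc, h0, hl, hs⟩ := hG
  by_contra hcon
  have key : ∀ i : Fin (n + 1), K ⊓ (c i).comap φ ≤ N := by
    intro i
    induction i using Fin.induction with
    | zero => rw [h0]; exact hker
    | succ i ih =>
      obtain ⟨hle, hcy⟩ := hs i
      have := (hc i.castSucc).subgroupOf (c i.succ)
      have := hc i.succ
      obtain ⟨x, hxK, hx⟩ := hs_cyc_pull (c i.castSucc) (c i.succ) hcy φ (K ⊓ (c i.succ).comap φ)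
        (fun y hy => hy.2)
      have hx2 : ∀ y ∈ K ⊓ (c i.succ).comap φ, ∃ k : ℤ, (x ^ k)⁻¹ * y ∈ N := by
        intro y hy
        obtain ⟨k, hk⟩ := hx y hy
        refine ⟨k, ih ⟨K.mul_mem (K.inv_mem (K.zpow_mem hxK.1 k)) hy.1, ?_⟩⟩
        simpa using hk
      by_cases hxN : x ∈ N
      · intro y hy
        obtain ⟨k, hk⟩ := hx2 y hy
        simpa using mul_mem (zpow_mem hxN k) hk
      · exfalso
        apply hcon
        refine ⟨x, hxK.1, hxN, ?_⟩
        have : N ⊔ zpowers x = N ⊔ (K ⊓ (c i.succ).comap φ) := by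
          apply le_antisymm
          · exact sup_le_sup_left (by simpa using hxK) N
          · refine sup_le le_sup_left ?_
            intro y hy
            obtain ⟨k, hk⟩ := hx2 y hy
            have := mul_mem (show x ^ k ∈ N ⊔ zpowers x from
              (le_sup_right : zpowers x ≤ _) ⟨k, rfl⟩) ((le_sup_left : N ≤ N ⊔ zpowers x) hk)
            simpa using this
        rw [this]
        infer_instance
  apply hKN
  have := key (Fin.last n)
  rw [hl] at this
  simpa using this

theorem hs_cyc_sup {G : Type*} [Group G] (N : Subgroup G) (hN : N.Normal) (x : G) :
    have := hN.subgroupOf (N ⊔ zpowers x)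
    IsCyclic (↥(N ⊔ zpowers x) ⧸ N.subgroupOf (N ⊔ zpowers x)) := by
  have := hN.subgroupOf (N ⊔ zpowers x)
  refine ⟨⟨QuotientGroup.mk ⟨x, (le_sup_right : zpowers x ≤ _) (mem_zpowers x)⟩, ?_⟩⟩
  intro y
  obtain ⟨⟨b, hb⟩, rfl⟩ := QuotientGroup.mk_surjective y
  obtain ⟨a, ha, z, ⟨k, rfl⟩, rfl⟩ := Subgroup.mem_sup_of_normal_left.mp hb
  refine ⟨k, ?_⟩
  simp only []
  rw [← QuotientGroup.mk_zpow]
  apply QuotientGroup.eq.mpr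
  rw [Subgroup.mem_subgroupOf]
  have := hN.conj_mem a ha (x ^ k)⁻¹
  simpa [mul_assoc] using this

theorem hs_L0 {G : Type*} [Group G] [Finite G]
    (h : ∀ N : Subgroup G, N.Normal → N ≠ ⊤ → ∃ x, x ∉ N ∧ (N ⊔ zpowers x).Normal) :
    IsSupersoluble G := by
  suffices H : ∀ N : Subgroup G, N.Normal →
      ∃ (n : ℕ) (c : Fin (n + 1) → Subgroup G) (hc : ∀ i, (c i).Normal),
        c 0 = N ∧ c (Fin.last n) = ⊤ ∧
        ∀ i : Fin n, c i.castSucc ≤ c i.succ ∧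
          ∃ _ : ((c i.castSucc).subgroupOf (c i.succ)).Normal,
          IsCyclic (↥(c i.succ) ⧸ ((c i.castSucc).subgroupOf (c i.succ))) by
    obtain ⟨n, c, hc, h0, hl, hs⟩ := H ⊥ inferInstance
    exact ⟨n, c, hc, h0, hl, fun i => ⟨(hs i).1, (hs i).2.2⟩⟩
  intro N
  induction N using (wellFounded_gt (α := Subgroup G)).induction with
  | _ N ih =>
  intro hN
  by_cases hT : N = ⊤
  · exact ⟨0, fun _ => N, fun _ => hN, rfl, hT, fun i => i.elim0⟩
  · obtain ⟨x, hx, hxn⟩ := h N hN hT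
    have hlt : N < N ⊔ zpowers x := by
      refine lt_of_le_of_ne le_sup_left (fun e => hx ?_)
      rw [e]; exact (le_sup_right : zpowers x ≤ _) (mem_zpowers x)
    obtain ⟨n, c, hc, h0, hl, hs⟩ := ih _ hlt hxn
    refine ⟨n + 1, Fin.cons N c, ?_, rfl, ?_, ?_⟩
    · intro i
      refine Fin.cases ?_ (fun j => ?_) i
      · exact hN
      · exact hc j
    · rw [← Fin.succ_last]; exact hl
    · intro i
      refine Fin.cases ?_ (fun j => ?_) i
      · have key : ∀ B : Subgroup G, B = N ⊔ zpowers x → N ≤ B ∧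
            ∃ _ : (N.subgroupOf B).Normal, IsCyclic (↥B ⧸ N.subgroupOf B) := by
          rintro _ rfl
          exact ⟨hlt.le, hN.subgroupOf _, hs_cyc_sup N hN x⟩
        exact key (c 0) h0
      · exact hs j

theorem hs_L2 {G Q : Type*} [Group G] [Group Q] [Finite G] (hG : IsSupersoluble G) (φ : G →* Q)
    (hφ : Function.Surjective φ) : IsSupersoluble Q := by
  have : Finite Q := Finite.of_surjective φ hφ
  apply hs_L0
  intro N hN hT
  obtain ⟨x, -, hx, hxn⟩ := hs_L1 hG (MonoidHom.id G) ⊤ (N.comap φ) (by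
    intro h
    apply hT
    rw [eq_top_iff]
    intro y _
    obtain ⟨z, rfl⟩ := hφ y
    exact h (mem_top z)) (by rw [MonoidHom.ker_id]; simp)
  refine ⟨φ x, hx, ?_⟩
  have := hxn.map φ hφ
  rwa [Subgroup.map_sup, Subgroup.map_comap_eq_self_of_surjective hφ, MonoidHom.map_zpowers] at this

theorem hs_sub {G H : Type*} [Group G] [Group H] [Finite H] (hG : IsSupersoluble G) (φ : H →* G)
    (hφ : Function.Injective φ) : IsSupersoluble H := by
  apply hs_L0
  intro N hN hT
  obtain ⟨x, -, hx⟩ := hs_L1 hG φ ⊤ N (by simpa using hT) (by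
    rw [(MonoidHom.ker_eq_bot_iff φ).mpr hφ]; simp)
  exact ⟨x, hx⟩

theorem hs_subdirect {G : Type*} [Group G] [Finite G] (A B : Subgroup G) [A.Normal] [B.Normal]
    (hA : IsSupersoluble (G ⧸ A)) (hB : IsSupersoluble (G ⧸ B)) (hAB : A ⊓ B = ⊥) :
    IsSupersoluble G := by
  apply hs_L0
  intro N hN hT
  by_cases h : A ≤ N
  · obtain ⟨x, -, hx⟩ := hs_L1 hA (QuotientGroup.mk' A) ⊤ N (by simpa using hT) (by simpa using h)
    exact ⟨x, hx⟩
  · obtain ⟨x, -, hx⟩ := hs_L1 hB (QuotientGroup.mk' B) A N h (by simp [hAB])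
    exact ⟨x, hx⟩

theorem hs_ext {G : Type*} [Group G] [Finite G] (x : G) [(zpowers x).Normal]
    (hA : IsSupersoluble (G ⧸ zpowers x)) : IsSupersoluble G := by
  apply hs_L0
  intro N hN hT
  by_cases h : zpowers x ≤ N
  · obtain ⟨x, -, hx⟩ := hs_L1 hA (QuotientGroup.mk' (zpowers x)) ⊤ N (by simpa using hT)
      (by simpa using h)
    exact ⟨x, hx⟩
  · exact ⟨x, by simpa using h, inferInstance⟩

/-- a normal subgroup of prime order inside a nontrivial normal subgroup -/
theorem hs_prime {G : Type*} [Group G] [Finite G] (hG : IsSupersoluble G) (K : Subgroup G)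
    [K.Normal] (hK : K ≠ ⊥) :
    ∃ x ∈ K, (zpowers x).Normal ∧ (orderOf x).Prime := by
  obtain ⟨x, hxK, hx, hn⟩ := hs_L1 hG (MonoidHom.id G) K ⊥ (by simpa using hK)
    (by rw [MonoidHom.ker_id]; simp)
  rw [bot_sup_eq] at hn
  have hx1 : orderOf x ≠ 1 := by simpa using hx
  obtain ⟨p, hp, d, hd⟩ := Nat.exists_prime_and_dvd hx1
  have hd0 : d ≠ 0 := by
    rintro rfl
    have := orderOf_pos x
    omega
  refine ⟨x ^ d, pow_mem hxK d, ⟨?_⟩, ?_⟩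
  · rintro _ ⟨k, rfl⟩ g
    obtain ⟨j, hj⟩ := hn.conj_mem x (mem_zpowers x) g
    refine ⟨j * k, ?_⟩
    simp only [] at hj ⊢
    rw [← conj_zpow, ← conj_pow, ← hj, ← zpow_natCast, ← zpow_natCast, ← zpow_mul, ← zpow_mul,
      ← zpow_mul]
    congr 1; ring
  · rw [orderOf_pow_of_dvd hd0 ⟨p, by rw [hd, mul_comm]⟩, hd, Nat.mul_div_cancel _ (Nat.pos_of_ne_zero hd0)]
    exact hp

def hsA (p : ℕ) (G : Type*) [Group G] : Subgroup G :=
  closure {x | (∃ a b : G, x = a * b * a⁻¹ * b⁻¹) ∨ ∃ a : G, x = a ^ (p - 1)}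

theorem hsA_map {G Q : Type*} [Group G] [Group Q] (p : ℕ) (φ : G →* Q) (a : G)
    (ha : a ∈ hsA p G) : φ a ∈ hsA p Q := by
  have : hsA p G ≤ (hsA p Q).comap φ := by
    rw [hsA, closure_le]
    rintro x (⟨a, b, rfl⟩ | ⟨a, rfl⟩)
    · exact subset_closure (Or.inl ⟨φ a, φ b, by simp only [map_mul, map_inv]⟩)
    · exact subset_closure (Or.inr ⟨φ a, map_pow φ a _⟩)
  exact this ha

theorem hsA_normal {G : Type*} [Group G] (p : ℕ) : (hsA p G).Normal := by
  constructor
  intro n hn g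
  exact hsA_map p (MulAut.conj g).toMonoidHom n hn

theorem hs_cent {G : Type*} [Group G] [Finite G] (x : G) (hn : (zpowers x).Normal)
    (hp : (orderOf x).Prime) (a : G) (ha : a ∈ hsA (orderOf x) G) : a * x = x * a := by
  let φ : G →* MulAut (zpowers x) := MulAut.conjNormal
  have e := IsCyclic.mulAutMulEquiv (zpowers x)
  have hcard := IsCyclic.card_mulAut (zpowers x)
  rw [Nat.card_zpowers, Nat.totient_prime hp] at hcard
  have : hsA (orderOf x) G ≤ φ.ker := by
    rw [hsA, closure_le]
    rintro _ (⟨a, b, rfl⟩ | ⟨a, rfl⟩)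
    · rw [SetLike.mem_coe, MonoidHom.mem_ker]
      apply e.injective
      simp only [map_mul, map_inv, map_one]
      rw [mul_comm (e (φ a)), mul_inv_cancel_right, mul_inv_cancel]
    · rw [SetLike.mem_coe, MonoidHom.mem_ker, map_pow, ← hcard]
      exact pow_card_eq_one'
  have h1 : φ a = 1 := this ha
  have h2 : ((φ a ⟨x, mem_zpowers x⟩ : zpowers x) : G) = x := by rw [h1]; rfl
  rw [MulAut.conjNormal_apply] at h2
  exact mul_inv_eq_iff_eq_mul.mp h2

/-- p-nilpotency of `hsA`. -/
theorem hs_claim (p : ℕ) (hp : p.Prime) : ∀ (n : ℕ) (X : Type*) [Group X] [Finite X],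
    Nat.card X = n → IsSupersoluble X →
    ∃ T : Subgroup X, T.Normal ∧ (∀ x ∈ T, x ^ p = 1 → x = 1) ∧
      ∃ k : ℕ, ∀ a ∈ hsA p X, a ^ p ^ k ∈ T := by
  intro n
  induction n using Nat.strong_induction_on with
  | _ n ih =>
  intro X _ _ hX hss
  by_cases htriv : (⊤ : Subgroup X) = ⊥
  · refine ⟨⊥, inferInstance, ?_, 0, ?_⟩
    · intro x hx _; simpa using hx
    · intro a _; rw [← htriv]; trivial
  obtain ⟨x, -, hxn, hxp⟩ := hs_prime hss ⊤ htriv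
  have hcard : Nat.card (X ⧸ zpowers x) < n := by
    rw [← hX, Subgroup.card_eq_card_quotient_mul_card_subgroup (zpowers x), Nat.card_zpowers]
    exact lt_mul_of_one_lt_right Nat.card_pos hxp.one_lt
  obtain ⟨T', hT'n, hT'p, k, hk⟩ := ih _ hcard (X ⧸ zpowers x) rfl
    (hs_L2 hss (QuotientGroup.mk' (zpowers x)) (QuotientGroup.mk'_surjective _))
  set T := T'.comap (QuotientGroup.mk' (zpowers x)) with hT
  have hkT : ∀ a ∈ hsA p X, a ^ p ^ k ∈ T := by
    intro a ha
    rw [hT, mem_comap, map_pow]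
    exact hk _ (hsA_map p _ a ha)
  have hTx : ∀ y ∈ T, y ^ p = 1 → y ∈ zpowers x := by
    intro y hy hyp
    have := hT'p _ hy (by rw [← map_pow, hyp, map_one])
    exact (QuotientGroup.eq_one_iff y).mp this
  have hord : ∀ y ∈ zpowers x, y ^ orderOf x = 1 := by
    rintro _ ⟨j, rfl⟩
    simp only []
    rw [← zpow_natCast, ← zpow_mul, mul_comm, zpow_mul, zpow_natCast, pow_orderOf_eq_one, one_zpow]
  by_cases hpx : p = orderOf x
  · subst hpx
    set p := orderOf x with hpdef
    have := Fact.mk hp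
    -- exponent of T'
    set t := Nat.card T' with ht
    have htp : Nat.Coprime p t := by
      rw [Nat.Prime.coprime_iff_not_dvd hp]
      intro hd
      obtain ⟨y, hy⟩ := exists_prime_orderOf_dvd_card' (G := T') p hd
      have h1 := hT'p y y.2 (by rw [← Subgroup.coe_pow, ← hy, pow_orderOf_eq_one]; rfl)
      have : y = 1 := Subtype.ext h1
      rw [this, orderOf_one] at hy
      exact hp.one_lt.ne hy
    have htT : ∀ y ∈ T, y ^ t ∈ zpowers x := by
      intro y hy
      have h1 : (⟨_, hy⟩ : T') ^ t = 1 := pow_card_eq_one'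
      have h2 := congrArg Subtype.val h1
      rw [← QuotientGroup.eq_one_iff]
      exact h2
    set S : Subgroup X := T ⊓ centralizer (zpowers x) with hS
    have hSn : S.Normal := inferInstance
    have hcenS : ∀ s : S, (s : X) ∈ zpowers x → s ∈ center S := by
      intro s hs
      rw [Subgroup.mem_center_iff]
      intro g
      apply Subtype.ext
      have := Subgroup.mem_centralizer_iff.mp g.2.2 s hs
      exact this.symm
    set i := (center S).index with hi
    have hip : Nat.Coprime p i := by
      rw [Nat.Prime.coprime_iff_not_dvd hp, hi, Subgroup.index]
      intro hd
      obtain ⟨y, hy⟩ := exists_prime_orderOf_dvd_card' (G := S ⧸ center S) p hd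
      obtain ⟨s, rfl⟩ := QuotientGroup.mk_surjective y
      have h1 : ((s : S ⧸ center S)) ^ t = 1 := by
        rw [← QuotientGroup.mk_pow, QuotientGroup.eq_one_iff]
        exact hcenS _ (htT _ s.2.1)
      have h2 := orderOf_dvd_of_pow_eq_one h1
      rw [hy] at h2
      exact (Nat.Prime.coprime_iff_not_dvd hp).mp htp h2
    have hmul : ∀ a b : S, (a * b) ^ (i * t) = a ^ (i * t) * b ^ (i * t) := by
      intro a b
      have h1 := congrArg (fun z : center S => ((z ^ t : center S) : S))
        (map_mul (MonoidHom.transferCenterPow S) a b)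
      rw [(show Commute (MonoidHom.transferCenterPow S a) (MonoidHom.transferCenterPow S b) from
        Subtype.ext (Subgroup.mem_center_iff.mp (MonoidHom.transferCenterPow S b).2 _)).mul_pow] at h1
      simp only [Subgroup.coe_mul, Subgroup.coe_pow, MonoidHom.transferCenterPow_apply] at h1
      simpa only [pow_mul, hi] using h1
    refine ⟨{ carrier := {g | g ∈ S ∧ g ^ (i * t) = 1}
              mul_mem' := ?_
              one_mem' := ⟨S.one_mem, one_pow _⟩
              inv_mem' := ?_ }, ⟨?_⟩, ?_, k + 1, ?_⟩
    · rintro a b ⟨ha, ha'⟩ ⟨hb, hb'⟩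
      refine ⟨S.mul_mem ha hb, ?_⟩
      have := congrArg Subtype.val (hmul ⟨a, ha⟩ ⟨b, hb⟩)
      simp only [Subgroup.coe_pow, Subgroup.coe_mul] at this
      rw [this, ha', hb', one_mul]
    · rintro a ⟨ha, ha'⟩
      exact ⟨S.inv_mem ha, by rw [inv_pow, ha', inv_one]⟩
    · rintro a ⟨ha, ha'⟩ g
      exact ⟨hSn.conj_mem a ha g, by rw [conj_pow, ha']; simp⟩
    · rintro a ⟨ha, ha'⟩ hap
      have hco : Nat.Coprime p (i * t) := Nat.Coprime.mul_right hip htp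
      have h1 := Nat.dvd_gcd (orderOf_dvd_of_pow_eq_one hap) (orderOf_dvd_of_pow_eq_one ha')
      rw [hco, Nat.dvd_one, orderOf_eq_one_iff] at h1
      exact h1
    · intro a ha
      have hc : a ^ p ^ k ∈ S := by
        refine ⟨hkT a ha, Subgroup.pow_mem (centralizer (zpowers x : Set X)) ?_ _⟩
        rw [Subgroup.mem_centralizer_iff]
        rintro _ ⟨j, rfl⟩
        have : Commute x a := (hs_cent x hxn hxp a ha).symm
        exact this.zpow_left j
      refine ⟨by rw [pow_succ, pow_mul]; exact pow_mem hc _, ?_⟩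
      have h1 := hord _ (htT _ hc.1)
      have : p ^ (k + 1) * (i * t) = p ^ k * t * p * i := by ring
      rw [← pow_mul, this, pow_mul, pow_mul, pow_mul, h1, one_pow]
  · refine ⟨T, inferInstance, ?_, k, hkT⟩
    intro y hy hyp
    have h1 := orderOf_dvd_of_pow_eq_one hyp
    have h2 := orderOf_dvd_of_pow_eq_one (hord y (hTx y hy hyp))
    have h3 := Nat.dvd_gcd h1 h2
    rw [(Nat.coprime_primes hp hxp).mpr hpx, Nat.dvd_one, orderOf_eq_one_iff] at h3
    exact h3

theorem hs_eigen {V : Type*} [AddCommGroup V] [Finite V] [Nontrivial V] (p : ℕ) [Fact p.Prime]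
    [Module (ZMod p) V] (f : Module.End (ZMod p) V) (hf : f ^ (p - 1) = 1) :
    ∃ μ : ZMod p, ∃ v : V, v ≠ 0 ∧ f v = μ • v := by
  classical
  have : Module.Finite (ZMod p) V := Module.Finite.of_finite
  have h1 : Polynomial.aeval f (Polynomial.X ^ p - Polynomial.X : Polynomial (ZMod p)) = 0 := by
    have : f ^ p = f := by
      have h : (p - 1) + 1 = p := Nat.sub_add_cancel (Fact.out : p.Prime).one_lt.le
      calc f ^ p = f ^ ((p - 1) + 1) := by rw [h]
        _ = f := by rw [pow_succ, hf, one_mul]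
    simp [this]
  have h2 := minpoly.dvd (ZMod p) f h1
  have hsp : (Polynomial.X ^ p - Polynomial.X : Polynomial (ZMod p)).Splits := by
    have := FiniteField.splits_X_pow_card_sub_X p (K := ZMod p)
    simpa using this
  have hne : (Polynomial.X ^ p - Polynomial.X : Polynomial (ZMod p)) ≠ 0 :=
    FiniteField.X_pow_card_sub_X_ne_zero _ (Fact.out : p.Prime).one_lt
  have h3 : (minpoly (ZMod p) f).Splits := hsp.of_dvd hne h2
  have hint : IsIntegral (ZMod p) f := Algebra.IsIntegral.isIntegral f
  obtain ⟨μ, hμ⟩ := h3.exists_eval_eq_zero (minpoly.degree_pos hint).ne'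
  have := Module.End.hasEigenvalue_of_isRoot (f := f) (μ := μ) hμ
  obtain ⟨v, hv⟩ := this.exists_hasEigenvector
  exact ⟨μ, v, hv.2, hv.apply_eq_smul⟩

theorem hs_eigen1 {V : Type*} [AddCommGroup V] [Finite V] [Nontrivial V] (p : ℕ) (hp : p.Prime)
    (hV : ∀ x : V, p • x = 0) (f : V →+ V) (hf : ∀ v, f^[p - 1] v = v) :
    ∃ j : ℕ, ∃ v : V, v ≠ 0 ∧ f v = j • v := by
  have := Fact.mk hp
  let _ : Module (ZMod p) V := AddCommGroup.zmodModule hV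
  obtain ⟨μ, v, hv, hfv⟩ := hs_eigen p (f.toZModLinearMap p) (by
    ext v
    rw [Module.End.pow_apply]
    exact hf v)
  refine ⟨μ.val, v, hv, ?_⟩
  have h2 : f v = μ • v := hfv
  rw [h2]
  conv_lhs => rw [← ZMod.natCast_zmod_val μ]
  rw [Nat.cast_smul_eq_nsmul]

theorem hs_eigen2 {N : Type*} [CommGroup N] [Finite N] [Nontrivial N] (p : ℕ) (hp : p.Prime)
    (hN : ∀ x : N, x ^ p = 1) (f : MulAut N) (hf : f ^ (p - 1) = 1) :
    ∃ j : ℕ, ∃ v : N, v ≠ 1 ∧ f v = v ^ j := by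
  have hit : ∀ k : ℕ, ∀ v : N, f^[k] v = (f ^ k) v := by
    intro k
    induction k with
    | zero => intro v; rfl
    | succ k ih =>
      intro v
      rw [Function.iterate_succ_apply, pow_succ, MulAut.mul_apply, ih]
  obtain ⟨j, v, hv, h⟩ := hs_eigen1 (V := Additive N) p hp (fun x => hN x.toMul)
    (MonoidHom.toAdditive f.toMonoidHom) (fun v => by
      have := hit (p - 1) v.toMul
      rw [hf] at this
      exact this)
  exact ⟨j, v.toMul, hv, h⟩

theorem hs_cyclicN {G : Type*} [Group G] [Finite G] (N : Subgroup G) [hNn : N.Normal] (hne : N ≠ ⊥)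
    (hmin : ∀ M : Subgroup G, M.Normal → M ≤ N → M ≠ ⊥ → M = N) (p : ℕ) (hp : p.Prime)
    (hexp : ∀ x ∈ N, x ^ p = 1) (hcomm : ∀ x ∈ N, ∀ y ∈ N, x * y = y * x) (k : ℕ)
    (hA : ∀ a ∈ hsA p G, a ^ p ^ k ∈ N) : ∃ x, N = zpowers x := by
  have := Fact.mk hp
  have hpg : IsPGroup p (hsA p G) := by
    intro a
    refine ⟨k + 1, Subtype.ext ?_⟩
    rw [Subgroup.coe_pow, pow_succ, pow_mul]
    exact hexp _ (hA a a.2)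
  have hAn : (hsA p G).Normal := hsA_normal p
  have hntr : Nontrivial N := (Subgroup.nontrivial_iff_ne_bot N).mpr hne
  -- A centralizes N
  have hcen : N ≤ centralizer (hsA p G : Set G) := by
    let _ : MulAction (hsA p G) N :=
      MulAction.compHom N ((MulAut.conjNormal (H := N)).comp (hsA p G).subtype)
    have hdvd : p ∣ Nat.card N := by
      obtain ⟨y, hy⟩ := exists_ne (1 : N)
      have h1 : orderOf y = p := orderOf_eq_prime (Subtype.ext (hexp y y.2)) hy
      rw [← h1]
      exact orderOf_dvd_natCard y
    obtain ⟨b, hb, hb1⟩ := hpg.exists_fixed_point_of_prime_dvd_card_of_fixed_point N hdvd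
      (a := 1) (fun a => map_one (MulAut.conjNormal (a : G)))
    have h1 : N ⊓ centralizer (hsA p G : Set G) = N := by
      apply hmin _ inferInstance inf_le_left
      intro h
      apply hb1
      apply Subtype.ext
      symm
      rw [Subgroup.coe_one, ← Subgroup.mem_bot, ← h]
      refine ⟨b.2, ?_⟩
      intro a ha
      have h2 : ((MulAut.conjNormal (H := N) a b : N) : G) = b := congrArg Subtype.val (hb ⟨a, ha⟩)
      rw [MulAut.conjNormal_apply] at h2
      exact mul_inv_eq_iff_eq_mul.mp h2
    rw [← h1]
    exact inf_le_right
  have hcenA : ∀ a ∈ hsA p G, ∀ y ∈ N, a * y = y * a := fun a ha y hy =>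
    Subgroup.mem_centralizer_iff.mp (hcen hy) a ha
  -- every g acts as a scalar
  have hscal : ∀ g : G, ∃ j : ℕ, ∀ y ∈ N, g * y * g⁻¹ = y ^ j := by
    intro g
    let _ : CommGroup N := { (inferInstance : Group N) with
      mul_comm := fun a b => Subtype.ext (hcomm a a.2 b b.2) }
    obtain ⟨j, v, hv, hgv⟩ := hs_eigen2 (N := N) p hp (fun x => Subtype.ext (hexp x x.2))
      (MulAut.conjNormal (H := N) g) (by
        rw [← map_pow]
        ext y
        rw [MulAut.conjNormal_apply,
          hcenA _ (subset_closure (Or.inr ⟨g, rfl⟩)) y y.2, mul_inv_cancel_right]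
        rfl)
    refine ⟨j, ?_⟩
    let M : Subgroup G :=
      { carrier := {y | y ∈ N ∧ g * y * g⁻¹ = y ^ j}
        mul_mem' := by
          rintro a b ⟨ha, ha'⟩ ⟨hb, hb'⟩
          refine ⟨N.mul_mem ha hb, ?_⟩
          have : Commute a b := hcomm a ha b hb
          rw [this.mul_pow, ← ha', ← hb']
          group
        one_mem' := ⟨N.one_mem, by simp⟩
        inv_mem' := by
          rintro a ⟨ha, ha'⟩
          refine ⟨N.inv_mem ha, ?_⟩
          rw [inv_pow, ← ha']
          group }
    have hM : M = N := by
      apply hmin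
      · constructor
        rintro y ⟨hy, hy'⟩ h
        refine ⟨hNn.conj_mem y hy h, ?_⟩
        rw [conj_pow, ← hy']
        have h1 := hcenA (g⁻¹ * h⁻¹ * g * h) (subset_closure (Or.inl ⟨g⁻¹, h⁻¹, by simp⟩)) y hy
        have h2 : g * (h * y * h⁻¹) * g⁻¹ = h * g * ((g⁻¹ * h⁻¹ * g * h) * y) * h⁻¹ * g⁻¹ := by group
        rw [h2, h1]
        group
      · intro y hy; exact hy.1
      · intro hb
        apply hv
        apply Subtype.ext
        rw [Subgroup.coe_one, ← Subgroup.mem_bot, ← hb]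
        refine ⟨v.2, ?_⟩
        have := congrArg Subtype.val hgv
        rw [MulAut.conjNormal_apply] at this
        exact this
    intro y hy
    rw [← hM] at hy
    exact hy.2
  obtain ⟨y, hyN, hy1⟩ := (Subgroup.ne_bot_iff_exists_ne_one).mp hne |>.elim
    (fun a ha => (⟨a, a.2, fun h => ha (Subtype.ext h)⟩ : ∃ y ∈ N, y ≠ 1))
  refine ⟨y, (hmin _ ⟨?_⟩ (by simpa using hyN) (by simpa using hy1)).symm⟩
  intro z hz g
  obtain ⟨j, hj⟩ := hscal g
  rw [hj z ((zpowers_le.mpr hyN) hz)]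
  exact pow_mem hz j

theorem hs_huppert : ∀ (n : ℕ) (G : Type*) [Group G] [Finite G], Nat.card G = n →
    (∀ M : Subgroup G, IsCoatom M → ∃ (L : Subgroup G) (_ : L.Normal), L ≤ M ∧
      IsSupersoluble (G ⧸ L)) → IsSupersoluble G := by
  intro n
  induction n using Nat.strong_induction_on with
  | _ n ih =>
  intro G _ _ hG hmax
  by_contra hnot
  -- proper quotients are supersoluble
  have hquo : ∀ (N : Subgroup G) [N.Normal], N ≠ ⊥ → IsSupersoluble (G ⧸ N) := by
    intro N _ hN
    refine ih _ ?_ (G ⧸ N) rfl ?_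
    · rw [← hG, Subgroup.card_eq_card_quotient_mul_card_subgroup N]
      exact lt_mul_of_one_lt_right Nat.card_pos (N.one_lt_card_iff_ne_bot.mpr hN)
    · intro M hM
      obtain ⟨L, hLn, hLM, hL⟩ := hmax _
        (Subgroup.isCoatom_comap_of_surjective (QuotientGroup.mk'_surjective N) hM)
      have hLn' : (L.map (QuotientGroup.mk' N)).Normal :=
        hLn.map _ (QuotientGroup.mk'_surjective N)
      refine ⟨L.map (QuotientGroup.mk' N), hLn', map_le_iff_le_comap.mpr hLM, ?_⟩
      refine hs_L2 hL (QuotientGroup.map L (L.map (QuotientGroup.mk' N)) (QuotientGroup.mk' N)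
        (le_comap_map _ _)) ?_
      intro y
      obtain ⟨z, rfl⟩ := QuotientGroup.mk_surjective y
      obtain ⟨w, rfl⟩ := QuotientGroup.mk_surjective z
      exact ⟨QuotientGroup.mk w, rfl⟩
  have htop : (⊤ : Subgroup G) ≠ ⊥ := by
    intro h
    apply hnot
    apply hs_L0
    intro N _ hN
    exact absurd (top_le_iff.mp (h ▸ bot_le)) hN
  -- minimal normal subgroup
  obtain ⟨N, hNmem, hNmin⟩ := (wellFounded_lt (α := Subgroup G)).has_min
    {N : Subgroup G | N.Normal ∧ N ≠ ⊥} ⟨⊤, inferInstance, htop⟩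
  obtain ⟨hNn, hNb⟩ := hNmem
  have hmin : ∀ M : Subgroup G, M.Normal → M ≤ N → M ≠ ⊥ → M = N := by
    intro M hM hMN hMb
    by_contra hne
    exact hNmin M ⟨hM, hMb⟩ (lt_of_le_of_ne hMN hne)
  have hmeet : ∀ (L : Subgroup G) (_ : L.Normal), IsSupersoluble (G ⧸ L) → N ≤ L := by
    intro L hL hss
    by_contra hNL
    apply hnot
    refine hs_subdirect N L (hquo N hNb) hss ?_
    by_contra hb
    exact hNL (inf_eq_left.mp (hmin (N ⊓ L) inferInstance inf_le_left hb))
  have hmeet' : ∀ L : Subgroup G, L.Normal → L ≠ ⊥ → N ≤ L := fun L hL hb =>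
    hmeet L hL (hquo L hb)
  have hfr : N ≤ frattini G := by
    rw [frattini, Order.radical]
    refine le_iInf₂ ?_
    intro M hM
    obtain ⟨L, hLn, hLM, hL⟩ := hmax M hM
    exact (hmeet L hLn hL).trans hLM
  have hntr : Nontrivial N := (Subgroup.nontrivial_iff_ne_bot N).mpr hNb
  -- N is abelian
  have hcomm : ∀ x ∈ N, ∀ y ∈ N, x * y = y * x := by
    have hnil : Group.IsNilpotent (frattini G) := frattini_nilpotent
    have hsolv : Group.IsSolvable N := by
      have : Group.IsSolvable (frattini G) := inferInstance
      exact Group.isSolvable_of_isSolvable_injective (Subgroup.inclusion_injective hfr)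
    have hlt := Group.IsSolvable.commutator_lt_top_of_nontrivial N
    have hle : ⁅N, N⁆ ≤ N := Subgroup.commutator_le_left N N
    have hbot : ⁅N, N⁆ = ⊥ := by
      by_contra hb
      have := hmin ⁅N, N⁆ inferInstance hle hb
      apply hlt.ne
      have h1 : (_root_.commutator N).map N.subtype = N := by
        rw [_root_.commutator_def, Subgroup.map_commutator, ← MonoidHom.range_eq_map,
          Subgroup.range_subtype, this]
      rw [← Subgroup.comap_map_eq_self_of_injective N.subtype_injective (_root_.commutator N), h1]
      simp
    have h2 := Subgroup.commutator_eq_bot_iff_le_centralizer.mp hbot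
    intro x hx y hy
    exact (Subgroup.mem_centralizer_iff.mp (h2 hy) x hx)
  obtain ⟨p, hp, hpd⟩ := Nat.exists_prime_and_dvd (Finite.one_lt_card (α := N)).ne'
  have hpF := Fact.mk hp
  have hexp : ∀ x ∈ N, x ^ p = 1 := by
    let M : Subgroup G :=
      { carrier := {y | y ∈ N ∧ y ^ p = 1}
        mul_mem' := by
          rintro a b ⟨ha, ha'⟩ ⟨hb, hb'⟩
          have : Commute a b := hcomm a ha b hb
          exact ⟨N.mul_mem ha hb, by rw [this.mul_pow, ha', hb', one_mul]⟩
        one_mem' := ⟨N.one_mem, by simp⟩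
        inv_mem' := by
          rintro a ⟨ha, ha'⟩
          exact ⟨N.inv_mem ha, by rw [inv_pow, ha', inv_one]⟩ }
    have hM : M = N := by
      apply hmin
      · constructor
        rintro y ⟨hy, hy'⟩ h
        exact ⟨hNn.conj_mem y hy h, by rw [conj_pow, hy']; simp⟩
      · intro y hy; exact hy.1
      · intro hb
        obtain ⟨y, hy⟩ := exists_prime_orderOf_dvd_card' (G := N) p hpd
        have hyM : (y : G) ∈ M := ⟨y.2, by
          rw [← Subgroup.coe_pow, ← hy, pow_orderOf_eq_one]; rfl⟩
        rw [hb, Subgroup.mem_bot] at hyM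
        have : y = 1 := Subtype.ext hyM
        rw [this, orderOf_one] at hy
        exact hp.one_lt.ne hy
    intro x hx
    rw [← hM] at hx
    exact hx.2
  obtain ⟨T, hTn, hTp, k, hk⟩ := hs_claim p hp _ (G ⧸ N) rfl (hquo N hNb)
  have hTbot : T = ⊥ := by
    by_contra hTb
    obtain ⟨x, hxT, hxn, hq⟩ := hs_prime (hquo N hNb) T hTb
    set q := orderOf x with hqdef
    have hqF := Fact.mk hq
    have hqp : q ≠ p := by
      intro h
      have := hTp x hxT (by rw [← h, pow_orderOf_eq_one])
      rw [this, orderOf_one] at hqdef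
      exact hq.one_lt.ne hqdef.symm
    let E : Subgroup G := (zpowers x).comap (QuotientGroup.mk' N)
    have hEn : E.Normal := inferInstance
    obtain ⟨Q⟩ : Nonempty (Sylow q E) := inferInstance
    have hfratt := Sylow.normalizer_sup_eq_top Q
    set R : Subgroup G := (Q : Subgroup E).map E.subtype with hR
    have hRq : ∀ y ∈ R, ∃ m : ℕ, y ^ q ^ m = 1 := by
      rintro _ ⟨y, hy, rfl⟩
      obtain ⟨m, hm⟩ := Q.2 ⟨y, hy⟩
      exact ⟨m, congrArg (fun z : (Q : Subgroup E) => ((z : E) : G)) hm⟩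
    have hRN : ∀ y ∈ R, y ∈ N → y = 1 := by
      intro y hy hyN
      obtain ⟨m, hm⟩ := hRq y hy
      have h1 := Nat.dvd_gcd (orderOf_dvd_of_pow_eq_one hm)
        (orderOf_dvd_of_pow_eq_one (hexp y hyN))
      rw [((Nat.coprime_primes hq hp).mpr hqp).pow_left m, Nat.dvd_one, orderOf_eq_one_iff] at h1
      exact h1
    have hRE : R ≤ E := map_subtype_le _
    -- R nontrivial
    have hRb : R ≠ ⊥ := by
      intro hb
      have hQb : (Q : Subgroup E) = ⊥ := (Subgroup.map_eq_bot_iff_of_injective _ E.subtype_injective).mp hb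
      have hdvd : q ∣ Nat.card E := by
        have h1 : Nat.card (zpowers x) ∣ Nat.card E := by
          let ψ : E →* zpowers x := ((QuotientGroup.mk' N).comp E.subtype).codRestrict _
            (fun y => y.2)
          apply Subgroup.card_dvd_of_surjective ψ
          rintro ⟨z, hz⟩
          obtain ⟨w, rfl⟩ := QuotientGroup.mk_surjective z
          exact ⟨⟨w, hz⟩, rfl⟩
        rwa [Nat.card_zpowers] at h1
      have h2 := Q.dvd_card_of_dvd_card hdvd
      have h3 : Nat.card (Q : Subgroup E) = 1 := by rw [hQb]; simp
      have h4 : q ∣ 1 := h3 ▸ h2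
      exact hq.one_lt.ne' (Nat.dvd_one.mp h4)
    have hEle : E ≤ R ⊔ N := by
      have hmapne : R.map (QuotientGroup.mk' N) ≠ ⊥ := by
        intro hb
        apply hRb
        rw [eq_bot_iff]
        intro y hy
        have h1 : QuotientGroup.mk' N y ∈ R.map (QuotientGroup.mk' N) := mem_map_of_mem _ hy
        rw [hb, Subgroup.mem_bot] at h1
        exact hRN y hy ((QuotientGroup.eq_one_iff y).mp h1)
      have hmaple : R.map (QuotientGroup.mk' N) ≤ zpowers x := map_le_iff_le_comap.mpr hRE
      have hmapeq : R.map (QuotientGroup.mk' N) = zpowers x := by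
        have h1 := Subgroup.card_dvd_of_le hmaple
        rw [Nat.card_zpowers, Nat.dvd_prime hq] at h1
        rcases h1 with h1 | h1
        · exact absurd (Subgroup.card_eq_one.mp h1) hmapne
        · apply Subgroup.eq_of_le_of_card_ge hmaple
          rw [h1, Nat.card_zpowers]
      have : E = R ⊔ N := by
        change (zpowers x).comap (QuotientGroup.mk' N) = _
        rw [← hmapeq, Subgroup.comap_map_eq, QuotientGroup.ker_mk']
      exact this.le
    have hnorm : normalizer (R : Set G) = ⊤ := by
      apply frattini_nongenerating
      rw [eq_top_iff, ← hfratt]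
      refine sup_le le_sup_left (hEle.trans (sup_le ?_ ?_))
      · exact le_normalizer.trans le_sup_left
      · exact hfr.trans le_sup_right
    have hRnormal : R.Normal := normalizer_eq_top_iff.mp hnorm
    have hNR := hmeet' R hRnormal hRb
    apply hNb
    rw [eq_bot_iff]
    intro y hy
    exact hRN y (hNR hy) hy
  obtain ⟨x, hx⟩ := hs_cyclicN N hNb hmin p hp hexp hcomm k (by
    intro a ha
    have := hk _ (hsA_map p (QuotientGroup.mk' N) a ha)
    rw [hTbot, Subgroup.mem_bot, ← map_pow] at this
    exact (QuotientGroup.eq_one_iff _).mp this)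
  subst hx
  exact hnot (hs_ext x (hquo _ hNb))

theorem hs_ku {G : Type*} [Group G] [Finite G] (H M : Subgroup G) (hM : IsMaximalIn M H)
    (hku : IsKUSubnormal M) :
    ∃ (L : Subgroup H) (_ : L.Normal), L ≤ M.subgroupOf H ∧ IsSupersoluble (H ⧸ L) := by
  obtain ⟨n, c, h0, hl, hs⟩ := hku
  obtain ⟨hMH, hco⟩ := hM
  by_contra hcon
  have key : ∀ i, c i ⊓ H ≤ M := by
    intro i
    induction i using Fin.induction with
    | zero => rw [h0]; exact inf_le_left
    | succ i ih =>
      obtain ⟨hle, hstep⟩ := hs i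
      by_contra hnle
      apply hcon
      have hge : ∀ j, M ≤ c j := by
        intro j
        induction j using Fin.induction with
        | zero => rw [h0]
        | succ j ih => exact ih.trans (hs j).1
      have hHc : H ≤ c i.succ := by
        have h1 : (c i.succ).subgroupOf H = ⊤ := by
          apply hco.2
          refine lt_of_le_of_ne (Subgroup.comap_mono (hge _)) ?_
          intro he
          apply hnle
          rintro y ⟨hy, hyH⟩
          have : (⟨y, hyH⟩ : H) ∈ (c i.succ).subgroupOf H := hy
          rw [← he] at this
          exact this
        exact Subgroup.subgroupOf_eq_top.mp h1
      rcases hstep with hnorm | hss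
      · have hMn : (M.subgroupOf H).Normal := by
          constructor
          intro y hy g
          have := hnorm.conj_mem ⟨y, hHc y.2⟩ (hge i.castSucc hy) ⟨g, hHc g.2⟩
          exact ih ⟨this, (g * y * g⁻¹).2⟩
        refine ⟨M.subgroupOf H, hMn, le_rfl, ?_⟩
        apply hs_L0
        intro N hN hNt
        obtain ⟨z, hz⟩ : ∃ z, z ∉ N := by
          by_contra h
          push Not at h
          exact hNt (eq_top_iff.mpr fun y _ => h y)
        refine ⟨z, hz, ?_⟩
        obtain ⟨w, rfl⟩ := QuotientGroup.mk_surjective z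
        set P := N ⊔ zpowers (w : H ⧸ M.subgroupOf H) with hP
        have hwP : (w : H ⧸ M.subgroupOf H) ∈ P :=
          (le_sup_right : zpowers _ ≤ P) (mem_zpowers _)
        have h1 : P.comap (QuotientGroup.mk' (M.subgroupOf H)) = ⊤ := by
          apply hco.2
          have hle1 : M.subgroupOf H ≤ P.comap (QuotientGroup.mk' (M.subgroupOf H)) :=
            QuotientGroup.le_comap_mk' _ _
          refine lt_of_le_of_ne hle1 ?_
          intro he
          have hw : w ∈ P.comap (QuotientGroup.mk' (M.subgroupOf H)) := hwP
          rw [← he] at hw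
          apply hz
          rw [(QuotientGroup.eq_one_iff w).mpr hw]
          exact N.one_mem
        have h2 : P = ⊤ := by
          rw [eq_top_iff]
          intro y _
          obtain ⟨v, rfl⟩ := QuotientGroup.mk_surjective y
          have : v ∈ P.comap (QuotientGroup.mk' (M.subgroupOf H)) := by rw [h1]; trivial
          exact this
        rw [h2]
        infer_instance
      · let φ : H →* (c i.succ ⧸ ((c i.castSucc).subgroupOf (c i.succ)).normalCore) :=
          (QuotientGroup.mk' _).comp (Subgroup.inclusion hHc)
        refine ⟨φ.ker, inferInstance, ?_, ?_⟩
        · intro y hy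
          have h1 := (QuotientGroup.eq_one_iff (Subgroup.inclusion hHc y)).mp hy
          have h2 := Subgroup.normalCore_le _ h1
          exact ih ⟨h2, y.2⟩
        · exact hs_sub hss (QuotientGroup.kerLift φ) (QuotientGroup.kerLift_injective φ)
  apply hco.1
  rw [Subgroup.subgroupOf_eq_top]
  have := key (Fin.last n)
  rw [hl, top_inf_eq] at this
  exact this

/-- If every `(n+1)`-maximal subgroup of `G` is `K`-`𝔘`-subnormal in `G`, then every
`n`-maximal subgroup of `G` is supersoluble. -/
theorem nmaximal_supersoluble_of_KUsubnormal (G : Type*) [Group G] [Finite G] (n : ℕ)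
    (h : ∀ H : Subgroup G, IsNMaximal (n + 1) H → IsKUSubnormal H) :
    ∀ H : Subgroup G, IsNMaximal n H → IsSupersoluble H := by
  intro H hH
  refine hs_huppert _ H rfl ?_
  intro M hM
  have hmap : (M.map H.subtype).subgroupOf H = M :=
    Subgroup.comap_map_eq_self_of_injective H.subtype_injective M
  have hmax : IsMaximalIn (M.map H.subtype) H := ⟨map_subtype_le M, by rw [hmap]; exact hM⟩
  have := hs_ku H (M.map H.subtype) hmax (h _ ⟨H, hH, hmax⟩)
  rwa [hmap] at this
end
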